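/- arXiv:1312.3679 — 6 statements merged into one kernel-verified Lean document; each statement's English description precedes it below -/
import Mathlib

section
/- A signature function σ on the triples of [n] can be realized as the signature function of a pseudolinear x-monotone drawing of K_n if and only if every 4-tuple a < b < c < d is of one of the eight forms ++++, +++−, ++−−, +−−−, −−−−, −−−+, −−++, −+++ in σ (equivalently, the sequence σ(a,b,c), σ(a,b,d), σ(a,c,d), σ(b,c,d) is monotone in the sign ordering). -/
/-- `Zval n` is Hill's conjectured value
`Z(n) = (1/4)⌊n/2⌋⌊(n−1)/2⌋⌊(n−2)/2⌋⌊(n−3)/2⌋` for the crossing number of `K n`.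
(The product of the four floors is always divisible by 4, so natural division is exact.) -/
def Zval (n : ℕ) : ℕ :=
  n / 2 * ((n - 1) / 2) * ((n - 2) / 2) * ((n - 3) / 2) / 4

/-- An x-monotone drawing of the complete graph `K n`: vertices `v i = (x i, 0)` with
`x` strictly increasing, and for each pair `i < j` a continuous function `e i j` on
`[x i, x j]` vanishing at the endpoints, whose graph is the arc of the edge `{i, j}`.
Edges avoid the intermediate vertices, any two distinct edges meet in finitely many
interior parameters, and at each such common point the difference changes sign
(a proper crossing). -/
structure XMonotoneDrawing (n : ℕ) where
  x : Fin n → ℝ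
  x_strictMono : StrictMono x
  e : Fin n → Fin n → ℝ → ℝ
  cont : ∀ i j : Fin n, i < j → ContinuousOn (e i j) (Set.Icc (x i) (x j))
  end_left : ∀ i j : Fin n, i < j → e i j (x i) = 0
  end_right : ∀ i j : Fin n, i < j → e i j (x j) = 0
  avoid_vertex : ∀ i m j : Fin n, i < m → m < j → e i j (x m) ≠ 0
  cross_finite : ∀ i j k l : Fin n, i < j → k < l → (i, j) ≠ (k, l) →
    {t : ℝ | max (x i) (x k) < t ∧ t < min (x j) (x l) ∧ e i j t = e k l t}.Finite
  sign_change : ∀ i j k l : Fin n, i < j → k < l → (i, j) ≠ (k, l) →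
    ∀ t : ℝ, max (x i) (x k) < t → t < min (x j) (x l) → e i j t = e k l t →
      ∃ ε > (0 : ℝ), ∀ s : ℝ, max (x i) (x k) < s → t - ε < s → s < t →
        ∀ u : ℝ, u < min (x j) (x l) → t < u → u < t + ε →
          (e i j s - e k l s) * (e i j u - e k l u) < 0

namespace XMonotoneDrawing

variable {n : ℕ}

/-- The set of parameters at which the edges `{i,j}` and `{k,l}` cross
(both edges are parametrized over the `x`-axis). -/
def crossSet (D : XMonotoneDrawing n) (i j k l : Fin n) : Set ℝ :=
  {t : ℝ | max (D.x i) (D.x k) < t ∧ t < min (D.x j) (D.x l) ∧ D.e i j t = D.e k l t}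

/-- The number of crossings between the edges `{i,j}` and `{k,l}`. -/
noncomputable def crossCount (D : XMonotoneDrawing n) (i j k l : Fin n) : ℕ :=
  (D.crossSet i j k l).ncard

/-- Two edges `{i,j}` and `{k,l}` are adjacent if they share an endpoint index. -/
def Adj (i j k l : Fin n) : Prop := i = k ∨ i = l ∨ j = k ∨ j = l

/-- A drawing is semisimple if no two adjacent edges cross. -/
def Semisimple (D : XMonotoneDrawing n) : Prop :=
  ∀ i j k l : Fin n, i < j → k < l → (i, j) ≠ (k, l) → Adj i j k l →
    D.crossCount i j k l = 0

/-- A drawing is weakly semisimple if every two adjacent edges cross an even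
number of times. -/
def WeaklySemisimple (D : XMonotoneDrawing n) : Prop :=
  ∀ i j k l : Fin n, i < j → k < l → (i, j) ≠ (k, l) → Adj i j k l →
    Even (D.crossCount i j k l)

/-- A drawing is simple if no two adjacent edges cross and every two non-adjacent
edges cross at most once. -/
def Simple (D : XMonotoneDrawing n) : Prop :=
  ∀ i j k l : Fin n, i < j → k < l → (i, j) ≠ (k, l) →
    (Adj i j k l → D.crossCount i j k l = 0) ∧
    (¬ Adj i j k l → D.crossCount i j k l ≤ 1)

/-- `cr D`: the total number of crossings of `D`. (Each unordered pair of distinct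
edges is counted twice in the sum, whence the division by 2; `crossCount` is
symmetric in the two edges.) -/
noncomputable def cr (D : XMonotoneDrawing n) : ℕ :=
  (∑ p : (Fin n × Fin n) × (Fin n × Fin n),
      if p.1.1 < p.1.2 ∧ p.2.1 < p.2.2 ∧ p.1 ≠ p.2 then
        D.crossCount p.1.1 p.1.2 p.2.1 p.2.2
      else 0) / 2

/-- `ocr D`: the number of unordered pairs of edges of `D` crossing an odd number
of times. (Each unordered pair appears twice as an ordered pair.) -/
noncomputable def ocr (D : XMonotoneDrawing n) : ℕ :=
  {p : (Fin n × Fin n) × (Fin n × Fin n) |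
    p.1.1 < p.1.2 ∧ p.2.1 < p.2.2 ∧ p.1 ≠ p.2 ∧
      Odd (D.crossCount p.1.1 p.1.2 p.2.1 p.2.2)}.ncard / 2

/-- The signature of the triple `i < j < k`: `true` (i.e. `+`) if the vertex `v j`
lies below the edge `{i, k}`, i.e. `e i k (x j) > 0`, and `false` (i.e. `−`) otherwise. -/
noncomputable def sig (D : XMonotoneDrawing n) (i j k : Fin n) : Bool :=
  if 0 < D.e i k (D.x j) then true else false

/-- `D` realizes the signature function `σ` if `σ_D` and `σ` agree on all
increasing triples. -/
def Realizes (D : XMonotoneDrawing n) (σ : Fin n → Fin n → Fin n → Bool) : Prop :=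
  ∀ i j k : Fin n, i < j → j < k → D.sig i j k = σ i j k

/-- A drawing is pseudolinear if its edges extend to continuous curves over all of `ℝ`
that avoid all vertices other than their endpoints and such that any two of these
extended curves cross exactly once (the crossing being a sign change of the difference). -/
def Pseudolinear (D : XMonotoneDrawing n) : Prop :=
  ∃ p : Fin n → Fin n → ℝ → ℝ,
    (∀ i j : Fin n, i < j → Continuous (p i j)) ∧
    (∀ i j : Fin n, i < j → ∀ t ∈ Set.Icc (D.x i) (D.x j), p i j t = D.e i j t) ∧
    (∀ i j m : Fin n, i < j → m ≠ i → m ≠ j → p i j (D.x m) ≠ 0) ∧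
    (∀ i j k l : Fin n, i < j → k < l → (i, j) ≠ (k, l) →
      ∃ t : ℝ, p i j t = p k l t ∧
        ∀ s u : ℝ, s < t → t < u →
          (p i j s - p k l s) * (p i j u - p k l u) < 0)

/-- The arc of the edge `{i, j}` as a subset of the plane `ℝ × ℝ`. -/
def edgeArc (D : XMonotoneDrawing n) (i j : Fin n) : Set (ℝ × ℝ) :=
  {q : ℝ × ℝ | D.x i ≤ q.1 ∧ q.1 ≤ D.x j ∧ q.2 = D.e i j q.1}

/-- The union of all edge arcs of the drawing. -/
def arcUnion (D : XMonotoneDrawing n) : Set (ℝ × ℝ) :=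
  ⋃ i : Fin n, ⋃ j : Fin n, ⋃ (_ : i < j), D.edgeArc i j

end XMonotoneDrawing

namespace Sig

variable {n : ℕ}

/-- With respect to a signature function `σ`, the vertex `m ∉ {i, j}` is on the left of
the directed edge `(i, j)` (where `i < j`). -/
def LeftOf (σ : Fin n → Fin n → Fin n → Bool) (i j m : Fin n) : Prop :=
  (i < m ∧ m < j ∧ σ i m j = false) ∨ (m < i ∧ σ m i j = true) ∨ (j < m ∧ σ i j m = true)

/-- The number of vertices on the left of the directed edge `(i, j)`. -/
noncomputable def leftCount (σ : Fin n → Fin n → Fin n → Bool) (i j : Fin n) : ℕ :=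
  {m : Fin n | LeftOf σ i j m}.ncard

/-- The edge `{i, j}` (with `i < j`) is a `k`-edge of `σ` if `min(ℓ, n − 2 − ℓ) = k`,
where `ℓ` is the number of vertices on its left. -/
def IsKEdge (σ : Fin n → Fin n → Fin n → Bool) (k : ℕ) (i j : Fin n) : Prop :=
  min (leftCount σ i j) (n - 2 - leftCount σ i j) = k

/-- `Ek σ k`: the number of `k`-edges of `σ`. -/
noncomputable def Ek (σ : Fin n → Fin n → Fin n → Bool) (k : ℕ) : ℕ :=
  {p : Fin n × Fin n | p.1 < p.2 ∧ IsKEdge σ k p.1 p.2}.ncard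

/-- `Ele σ k = E_{≤k}(σ)`: the number of `≤k`-edges of `σ`. -/
noncomputable def Ele (σ : Fin n → Fin n → Fin n → Bool) (k : ℕ) : ℕ :=
  ∑ i ∈ Finset.range (k + 1), Ek σ i

/-- `Elele σ k = E_{≤≤k}(σ) = Σ_{j=0}^{k} E_{≤j}(σ)`. -/
noncomputable def Elele (σ : Fin n → Fin n → Fin n → Bool) (k : ℕ) : ℕ :=
  ∑ j ∈ Finset.range (k + 1), Ele σ j

/-- `E_{≤≤k}` with an integer index, which vanishes for negative `k`. -/
noncomputable def ElelZ (σ : Fin n → Fin n → Fin n → Bool) (k : ℤ) : ℕ :=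
  if 0 ≤ k then Elele σ k.toNat else 0

/-- The left count of the edge `{i, j}` in the drawing restricted to the first
`n − 1` vertices (the last vertex deleted). -/
noncomputable def leftCountRes (σ : Fin n → Fin n → Fin n → Bool) (i j : Fin n) : ℕ :=
  {m : Fin n | LeftOf σ i j m ∧ (m : ℕ) + 1 < n}.ncard

/-- The edge `{i, j}` is a `k`-edge of the restriction of `σ` to the first `n − 1`
vertices (there `min(ℓ', (n−1) − 2 − ℓ') = k`). -/
def IsKEdgeRes (σ : Fin n → Fin n → Fin n → Bool) (k : ℕ) (i j : Fin n) : Prop :=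
  min (leftCountRes σ i j) (n - 3 - leftCountRes σ i j) = k

/-- The edge `{i, j}` is a `(D,D')`-invariant `≤k`-edge: it avoids the last vertex and
is an `m`-edge with `m ≤ k` both in `σ` and in the restriction of `σ` to the first
`n − 1` vertices. -/
def InvariantLeK (σ : Fin n → Fin n → Fin n → Bool) (k : ℕ) (i j : Fin n) : Prop :=
  (j : ℕ) + 1 < n ∧ (∃ m ≤ k, IsKEdge σ m i j) ∧ (∃ m ≤ k, IsKEdgeRes σ m i j)

/-- The ten 4-tuple forms allowed in signature functions of semisimple x-monotone
drawings: `++++, −−−−, ++−−, −−++, −++−, +−−+, −−−+, +++−, +−−−, −+++`. -/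
def AllowedForm (a b c d : Bool) : Prop :=
  (a, b, c, d) ∈ ([(true, true, true, true), (false, false, false, false),
    (true, true, false, false), (false, false, true, true),
    (false, true, true, false), (true, false, false, true),
    (false, false, false, true), (true, true, true, false),
    (true, false, false, false), (false, true, true, true)] :
      List (Bool × Bool × Bool × Bool))

/-- A signature function is admissible if every increasing 4-tuple is of one of the
ten allowed forms. -/
def Admissible (σ : Fin n → Fin n → Fin n → Bool) : Prop :=
  ∀ a b c d : Fin n, a < b → b < c → c < d →
    AllowedForm (σ a b c) (σ a b d) (σ a c d) (σ b c d)

/-- The six convex forms: `++++, −−−−, ++−−, −−++, −++−, +−−+`. -/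
def ConvexForm (a b c d : Bool) : Prop :=
  (a, b, c, d) ∈ ([(true, true, true, true), (false, false, false, false),
    (true, true, false, false), (false, false, true, true),
    (false, true, true, false), (true, false, false, true)] :
      List (Bool × Bool × Bool × Bool))

/-- The 4-tuple `a < b < c < d` is convex in `σ`. -/
def Convex4 (σ : Fin n → Fin n → Fin n → Bool) (a b c d : Fin n) : Prop :=
  ConvexForm (σ a b c) (σ a b d) (σ a c d) (σ b c d)

/-- The eight 4-tuple forms of pseudolinear x-monotone drawings (the sign-monotone
sequences): `++++, +++−, ++−−, +−−−, −−−−, −−−+, −−++, −+++`. -/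
def PLForm (a b c d : Bool) : Prop :=
  (a, b, c, d) ∈ ([(true, true, true, true), (true, true, true, false),
    (true, true, false, false), (true, false, false, false),
    (false, false, false, false), (false, false, false, true),
    (false, false, true, true), (false, true, true, true)] :
      List (Bool × Bool × Bool × Bool))

/-- The relation `j ⋖ k` on `{j : i < j}`: `j ⋖ k` iff (`j < k` and `σ i j k = +`)
or (`k < j` and `σ i k j = −`). -/
def Below (σ : Fin n → Fin n → Fin n → Bool) (i j k : Fin n) : Prop :=
  (j < k ∧ σ i j k = true) ∨ (k < j ∧ σ i k j = false)

end Sig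

namespace Sig

variable {n : ℕ}

theorem plForm_iff (a b c d : Bool) :
    PLForm a b c d ↔ (a = c → b = a) ∧ (a = d → b = a) ∧ (a = d → c = a) ∧ (b = d → c = b) := by
  revert a b c d
  unfold PLForm
  decide

/-- Every increasing 4-tuple has a sign-monotone form. -/
def MonotoneForms (σ : Fin n → Fin n → Fin n → Bool) : Prop :=
  ∀ a b c d : Fin n, a < b → b < c → c < d →
    PLForm (σ a b c) (σ a b d) (σ a c d) (σ b c d)

/-- The sign, as a real number, of the pseudoline through `i < j` over the vertex `m`. -/
noncomputable def side (σ : Fin n → Fin n → Fin n → Bool) (m i j : Fin n) : ℝ :=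
  if m = i ∨ m = j then 0
  else if m < i then (if σ m i j then -1 else 1)
  else if m < j then (if σ i m j then 1 else -1)
  else (if σ i j m then -1 else 1)

/-- `f` orders the pairs `i < j` as the pseudolines through them are ordered far to the left. -/
def IsLeftOrder (σ : Fin n → Fin n → Fin n → Bool) (f : Fin n → Fin n → ℝ) (k : ℕ) : Prop :=
  ∀ i j l : Fin n, i < j → j < l → (l : ℕ) < k →
    (σ i j l = true → f i l < f i j ∧ f j l < f i l) ∧
    (σ i j l = false → f i j < f i l ∧ f i l < f j l)

/-- The pseudolines through a common last vertex `c` are linearly ordered. -/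
theorem exists_rank (σ : Fin n → Fin n → Fin n → Bool) (hσ : MonotoneForms σ) (c : Fin n) :
    ∃ g : Fin n → ℝ, (∀ i, 0 ≤ g i ∧ g i < 1) ∧
      ∀ i j, i < j → j < c → (σ i j c = true → g j < g i) ∧ (σ i j c = false → g i < g j) := by
  classical
  let R : Fin n → Fin n → Prop := fun i j =>
    (i < j ∧ σ i j c = true) ∨ (j < i ∧ σ j i c = false)
  let S : Fin n → Finset (Fin n) := fun i => Finset.univ.filter fun x => x < c ∧ R i x
  have key : ∀ i j, i < c → j < c → R i j → (S j).card < (S i).card := by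
    intro i j hi hj hij
    apply Finset.card_lt_card
    rw [Finset.ssubset_iff_of_subset]
    · exact ⟨j, by simp [S, hj, hij], by simp [S, R]⟩
    · intro x hx
      simp only [S, Finset.mem_filter, Finset.mem_univ, true_and] at hx ⊢
      refine ⟨hx.1, ?_⟩
      have h4 := fun a b d h1 h2 h3 => (plForm_iff _ _ _ _).1 (hσ a b d c h1 h2 h3)
      have h5 := h4 i j x
      have h6 := h4 i x j
      have h7 := h4 j i x
      have h8 := h4 j x i
      have h9 := h4 x i j
      have h10 := h4 x j i
      simp only [R] at hx hij ⊢
      have := hx.1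
      grind
  have hn : (0 : ℝ) < n + 1 := by positivity
  refine ⟨fun i => (S i).card / (n + 1 : ℝ), fun i => ⟨by positivity, ?_⟩, ?_⟩
  · rw [div_lt_one hn]
    have : (S i).card ≤ n := by simpa using Finset.card_le_univ (S i)
    have : ((S i).card : ℝ) ≤ n := by exact_mod_cast this
    linarith
  · intro i j hij hj
    constructor <;> intro h
    · have := key i j (hij.trans hj) hj (Or.inl ⟨hij, h⟩)
      exact div_lt_div_of_pos_right (Nat.cast_lt.2 this) hn
    · have := key j i hj (hij.trans hj) (Or.inr ⟨hij, h⟩)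
      exact div_lt_div_of_pos_right (Nat.cast_lt.2 this) hn

theorem exists_isLeftOrder (σ : Fin n → Fin n → Fin n → Bool) (hσ : MonotoneForms σ) (k : ℕ)
    (hk : k ≤ n) :
    ∃ f : Fin n → Fin n → ℝ, (∀ i j, |f i j| < 1) ∧ IsLeftOrder σ f k ∧
      ∀ i j i' j' : Fin n, i < j → i' < j' → (j : ℕ) < k → (j' : ℕ) < k →
        f i j = f i' j' → i = i' ∧ j = j' := by
  induction k with
  | zero => exact ⟨fun _ _ => 0, by simp, by intro i j l _ _ h; omega, by intros; omega⟩
  | succ k ih =>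
    obtain ⟨f, hb, ho, hinj⟩ := ih (by omega)
    obtain ⟨g, hg, hgo⟩ := exists_rank σ hσ ⟨k, hk⟩
    set c : Fin n := ⟨k, hk⟩ with hc
    have hlt : ∀ x : Fin n, (x : ℕ) < k + 1 → x ≠ c → (x : ℕ) < k := by
      intro x hx hxc
      have : (x : ℕ) ≠ k := fun h => hxc (Fin.ext h)
      omega
    simp only [abs_lt] at hb ⊢
    refine ⟨fun i j => if j = c then g i / 4 else (f i j + 2 * if σ i j c then 1 else -1) / 4,
      ?_, ?_, ?_⟩
    · intro i j
      have := hb i j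
      have := hg i
      dsimp only
      split_ifs <;> constructor <;> linarith
    · intro i j l hij hjl hl
      have hjc : j ≠ c := by
        intro h; rw [Fin.lt_def] at hjl; rw [h] at hjl; simp [hc] at hjl; omega
      by_cases hlc : l = c
      · subst hlc
        have h1 := hgo i j hij hjl
        have h2 := hb i j
        have h3 := hg i
        have h4 := hg j
        simp only [hjc, if_true, if_false]
        constructor <;> intro h <;> simp only [h] at h1 ⊢ <;> constructor <;>
          simp at h1 ⊢ <;> linarith
      · have hl' := hlt l hl hlc
        have h1 := ho i j l hij hjl hl'
        have h4 := (plForm_iff _ _ _ _).1 (hσ i j l c hij hjl hl')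
        have h2 := hb i j
        have h3 := hb i l
        have h5 := hb j l
        simp only [hjc, hlc, if_false]
        generalize σ i j l = a at *
        generalize σ i j c = b at *
        generalize σ i l c = d at *
        generalize σ j l c = e at *
        cases a <;> cases b <;> cases d <;> cases e <;> simp at h1 h4 ⊢ <;>
          constructor <;> linarith
    · intro i j i' j' hij hij' hj hj' h
      by_cases h1 : j = c <;> by_cases h2 : j' = c
      · subst h1
        subst h2
        simp only [if_true] at h
        refine ⟨?_, rfl⟩
        by_contra hne
        rcases lt_or_gt_of_ne hne with hlt | hlt
        · have := hgo i i' hlt hij'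
          cases hs : σ i i' c <;> simp [hs] at this <;> linarith
        · have := hgo i' i hlt hij
          cases hs : σ i' i c <;> simp [hs] at this <;> linarith
      · exfalso
        have := hg i
        have := hb i' j'
        simp only [h1, h2, if_true, if_false] at h
        split_ifs at h <;> linarith
      · exfalso
        have := hg i'
        have := hb i j
        simp only [h1, h2, if_true, if_false] at h
        split_ifs at h <;> linarith
      · apply hinj i j i' j' hij hij' (hlt j hj h1) (hlt j' hj' h2)
        have := hb i j
        have := hb i' j'
        simp only [h1, h2, if_false] at h
        split_ifs at h <;> linarith

/-- A pseudoline that lies weakly above a vertex and weakly below a later one lies, far to the left,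
above the pseudoline through these two vertices; and the same upside down. -/
theorem le_of_side (σ : Fin n → Fin n → Fin n → Bool) (hσ : MonotoneForms σ)
    (f : Fin n → Fin n → ℝ) (hf : IsLeftOrder σ f n) {i j m m' : Fin n} (hij : i < j)
    (hm : m < m') :
    (0 ≤ side σ m i j → side σ m' i j ≤ 0 → f m m' ≤ f i j) ∧
    (side σ m i j ≤ 0 → 0 ≤ side σ m' i j → f i j ≤ f m m') := by
  have T := fun a b c h1 h2 => hf a b c h1 h2 c.2
  have Q := fun a b c d h1 h2 h3 => (plForm_iff _ _ _ _).1 (hσ a b c d h1 h2 h3)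
  unfold side
  rcases lt_trichotomy i m with h1 | h1 | h1 <;>
  rcases lt_trichotomy i m' with h2 | h2 | h2 <;>
  rcases lt_trichotomy j m with h3 | h3 | h3 <;>
  rcases lt_trichotomy j m' with h4 | h4 | h4 <;>
  first
  | (exfalso; omega)
  | grind

end Sig

/-- The piecewise linear function with value `d k` at `k = 0, …, N`, constant outside `[0, N]`. -/
noncomputable def interp (N : ℕ) (d : ℕ → ℝ) (t : ℝ) : ℝ :=
  d 0 + ∑ k ∈ Finset.range N, (d (k + 1) - d k) * max 0 (min (t - k) 1)

theorem continuous_interp (N : ℕ) (d : ℕ → ℝ) : Continuous (interp N d) := by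
  unfold interp
  fun_prop

theorem interp_sub (N : ℕ) (d d' : ℕ → ℝ) (t : ℝ) :
    interp N d t - interp N d' t = interp N (fun k => d k - d' k) t := by
  unfold interp
  rw [add_sub_add_comm, ← Finset.sum_sub_distrib]
  congr 1
  exact Finset.sum_congr rfl fun k _ => by ring

theorem interp_of_le {N k : ℕ} (hk : k ≤ N) (d : ℕ → ℝ) {t : ℝ} (ht : t ≤ k) :
    interp N d t = interp k d t := by
  unfold interp
  congr 1
  refine (Finset.sum_subset (Finset.range_mono hk) fun j _ hj => ?_).symm
  have : (k : ℝ) ≤ j := by simpa using hj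
  rw [max_eq_left, mul_zero]
  exact (min_le_left _ _).trans (by linarith)

theorem interp_of_ge {N : ℕ} (d : ℕ → ℝ) {t : ℝ} (ht : (N : ℝ) ≤ t) : interp N d t = d N := by
  unfold interp
  rw [Finset.sum_congr rfl (g := fun k => d (k + 1) - d k), Finset.sum_range_sub]
  · ring
  · intro k hk
    have : (k : ℝ) + 1 ≤ N := by exact_mod_cast Finset.mem_range.1 hk
    rw [min_eq_right (by linarith), max_eq_right zero_le_one, mul_one]

theorem interp_natCast {N k : ℕ} (hk : k ≤ N) (d : ℕ → ℝ) : interp N d k = d k := by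
  rw [interp_of_le hk d le_rfl, interp_of_ge d le_rfl]

theorem interp_of_nonpos {N : ℕ} (d : ℕ → ℝ) {t : ℝ} (ht : t ≤ 0) : interp N d t = d 0 := by
  rw [interp_of_le (Nat.zero_le N) d (by simpa using ht)]
  simp [interp]

theorem interp_of_mem {N k : ℕ} (hk : k < N) (d : ℕ → ℝ) {t : ℝ} (h : (k : ℝ) ≤ t)
    (h' : t ≤ k + 1) : interp N d t = d k + (d (k + 1) - d k) * (t - k) := by
  rw [interp_of_le (k := k + 1) hk d (by push_cast; exact h')]
  have h0 := interp_of_ge d h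
  unfold interp at h0 ⊢
  rw [Finset.sum_range_succ, ← add_assoc, h0, min_eq_left (by linarith), max_eq_right (by linarith)]

theorem interp_neg {N K : ℕ} (hK : K ≤ N) {d : ℕ → ℝ} (hd : ∀ k ≤ K, d k < 0) {t : ℝ}
    (ht : t ≤ K) : interp N d t < 0 := by
  rcases le_or_gt t 0 with h0 | h0
  · rw [interp_of_nonpos d h0]
    exact hd 0 (Nat.zero_le _)
  obtain ⟨k, hk⟩ : ∃ k : ℕ, ⌈t⌉₊ = k + 1 := Nat.exists_eq_succ_of_ne_zero (Nat.ceil_pos.2 h0).ne'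
  have h1 : t ≤ k + 1 := by exact_mod_cast hk ▸ Nat.le_ceil t
  have h2 : (k : ℝ) < t := Nat.lt_ceil.1 (by omega)
  have h3 : k + 1 ≤ K := hk ▸ Nat.ceil_le.2 ht
  rw [interp_of_mem (by omega) d h2.le h1]
  nlinarith [hd k (by omega), hd (k + 1) h3]

theorem interp_pos {N K : ℕ} {d : ℕ → ℝ} (hd0 : 0 ≤ d K)
    (hd : ∀ k ≤ N, K < k → 0 < d k) (hN : 0 < d N) {t : ℝ} (ht : K < t) : 0 < interp N d t := by
  rcases le_or_gt (N : ℝ) t with h0 | h0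
  · rwa [interp_of_ge d h0]
  have hpos : 0 ≤ t := (Nat.cast_nonneg K).trans ht.le
  have h1 : (⌊t⌋₊ : ℝ) ≤ t := Nat.floor_le hpos
  have h2 : t < ⌊t⌋₊ + 1 := Nat.lt_floor_add_one t
  have h3 : K ≤ ⌊t⌋₊ := Nat.le_floor ht.le
  have h4 : ⌊t⌋₊ < N := (Nat.floor_lt hpos).2 h0
  rw [interp_of_mem h4 d h1 h2.le]
  have h5 := hd (⌊t⌋₊ + 1) h4 (by omega)
  rcases h3.eq_or_lt with h | h
  · rw [← h] at h1 h2 h5 ⊢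
    nlinarith
  · nlinarith [hd _ h4.le h]

theorem interp_crossing {N K : ℕ} (hK : K < N) {d : ℕ → ℝ} (hneg : ∀ k ≤ K, d k < 0)
    (hd0 : 0 ≤ d (K + 1)) (hpos : ∀ k ≤ N, K + 1 < k → 0 < d k) (hN : 0 < d N) :
    ∃ t, interp N d t = 0 ∧ (∀ s < t, interp N d s < 0) ∧ ∀ u, t < u → 0 < interp N d u := by
  have h0 := hneg K le_rfl
  have hΔ : 0 < d (K + 1) - d K := by linarith
  have hr0 : 0 ≤ -d K / (d (K + 1) - d K) := by apply div_nonneg <;> linarith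
  have hr1 : -d K / (d (K + 1) - d K) ≤ 1 := by rw [div_le_one hΔ]; linarith
  set r := -d K / (d (K + 1) - d K) with hr
  have hr2 : (d (K + 1) - d K) * r = -d K := by rw [hr]; field_simp
  refine ⟨K + r, ?_, ?_, ?_⟩
  · rw [interp_of_mem hK d (by linarith) (by linarith)]
    linarith [show (d (K + 1) - d K) * (K + r - K) = (d (K + 1) - d K) * r by ring]
  · intro s hs
    rcases le_or_gt s K with h | h
    · exact interp_neg hK.le hneg h
    · rw [interp_of_mem hK d h.le (by linarith)]
      nlinarith
  · intro u hu
    rcases le_or_gt u (K + 1) with h | h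
    · rw [interp_of_mem hK d (by linarith) h]
      nlinarith
    · exact interp_pos (K := K + 1) hd0 hpos hN (by push_cast; exact h)

section Sweep

variable {α : Type*} (s : ℕ → α → ℝ) (f : α → ℝ)

/-- Heights just to the right of the first `k` vertices: the order of `f`, updated at each vertex
by the sides `s`, with the curves through that vertex reversed. -/
noncomputable def heightAfter : ℕ → α → ℝ
  | 0, A => f A
  | k + 1, A =>
      (2 * s k A + if s k A = 0 then -heightAfter k A else heightAfter k A) / 4

/-- Heights at the breakpoints `0, …, n + 1`, the vertices being at `1, …, n`. -/
noncomputable def height (n : ℕ) : ℕ → α → ℝ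
  | 0, A => f A
  | k + 1, A => if k < n then (if s k A = 0 then 0 else heightAfter s f (k + 1) A) else -f A

variable {s f}

theorem abs_heightAfter_lt (hs : ∀ k A, s k A = -1 ∨ s k A = 0 ∨ s k A = 1)
    (hf : ∀ A, |f A| < 1) (k : ℕ) (A : α) : |heightAfter s f k A| < 1 := by
  induction k with
  | zero => exact hf A
  | succ k ih =>
    rw [abs_lt] at ih ⊢
    rw [heightAfter]
    rcases hs k A with h | h | h <;> norm_num [h] <;> constructor <;> linarith

theorem height_sign (hs : ∀ k A, s k A = -1 ∨ s k A = 0 ∨ s k A = 1)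
    (hf : ∀ A, |f A| < 1) {n k : ℕ} (hk : k < n) (A : α) :
    (height s f n (k + 1) A = 0 ↔ s k A = 0) ∧ (0 < height s f n (k + 1) A ↔ s k A = 1) := by
  have h := abs_lt.1 (abs_heightAfter_lt hs hf k A)
  simp only [height, hk, if_true, heightAfter]
  rcases hs k A with h1 | h1 | h1 <;> norm_num [h1]
  · constructor <;> linarith
  · constructor <;> linarith

theorem heightAfter_lt_or_gt (hs : ∀ k A, s k A = -1 ∨ s k A = 0 ∨ s k A = 1)
    (hf : ∀ A, |f A| < 1) {n : ℕ} {A B : α} (hAB : f A < f B)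
    (h : ∀ m m', m < m' → m' < n →
      ¬ (0 ≤ s m A ∧ s m B ≤ 0 ∧ s m' A ≤ 0 ∧ 0 ≤ s m' B)) (k : ℕ) (hk : k ≤ n) :
    ((∀ m < k, ¬ (0 ≤ s m A ∧ s m B ≤ 0)) ∧ heightAfter s f k A < heightAfter s f k B) ∨
    ((∃ m < k, 0 ≤ s m A ∧ s m B ≤ 0) ∧ heightAfter s f k B < heightAfter s f k A) := by
  induction k with
  | zero => exact Or.inl ⟨by simp, hAB⟩
  | succ k ih =>
    have hA := abs_lt.1 (abs_heightAfter_lt hs hf k A)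
    have hB := abs_lt.1 (abs_heightAfter_lt hs hf k B)
    simp only [heightAfter]
    rcases ih (by omega) with ⟨h1, h2⟩ | ⟨⟨m, hm, h1⟩, h2⟩
    · by_cases hP : 0 ≤ s k A ∧ s k B ≤ 0
      · refine Or.inr ⟨⟨k, by omega, hP⟩, ?_⟩
        rcases hs k A with ha | ha | ha <;> rcases hs k B with hb | hb | hb <;>
          norm_num [ha, hb] at hP <;>
            norm_num [ha, hb] <;> linarith
      · refine Or.inl ⟨fun m hm => ?_, ?_⟩
        · rcases Nat.lt_succ_iff_lt_or_eq.1 hm with hm | rfl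
          exacts [h1 m hm, hP]
        · rcases hs k A with ha | ha | ha <;> rcases hs k B with hb | hb | hb <;>
            norm_num [ha, hb] at hP <;>
            norm_num [ha, hb] <;> linarith
    · refine Or.inr ⟨⟨m, by omega, h1⟩, ?_⟩
      have := h m k hm (by omega)
      rcases hs k A with ha | ha | ha <;> rcases hs k B with hb | hb | hb <;>
        norm_num [ha, hb, h1] at this <;>
            norm_num [ha, hb, h1] <;> linarith

theorem height_crossing (hs : ∀ k A, s k A = -1 ∨ s k A = 0 ∨ s k A = 1)
    (hf : ∀ A, |f A| < 1) {n : ℕ} {A B : α} (hAB : f A < f B)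
    (h : ∀ m m', m < m' → m' < n →
      ¬ (0 ≤ s m A ∧ s m B ≤ 0 ∧ s m' A ≤ 0 ∧ 0 ≤ s m' B)) :
    ∃ K ≤ n, (∀ k ≤ K, height s f n k A - height s f n k B < 0) ∧
      0 ≤ height s f n (K + 1) A - height s f n (K + 1) B ∧
      ∀ k ≤ n + 1, K + 1 < k → 0 < height s f n k A - height s f n k B := by
  have key := heightAfter_lt_or_gt hs hf hAB h
  have neg : ∀ K, K ≤ n → (∀ m < K, ¬ (0 ≤ s m A ∧ s m B ≤ 0)) →
      ∀ k ≤ K, height s f n k A - height s f n k B < 0 := by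
    intro K hK hm k hk
    cases k with
    | zero => simpa [height] using hAB
    | succ k =>
      have hkn : k < n := by omega
      have hP := hm k hk
      have hA := height_sign hs hf hkn A
      have hB := height_sign hs hf hkn B
      rcases key (k + 1) (by omega) with ⟨-, h2⟩ | ⟨⟨m, hm1, hm2⟩, -⟩
      · simp only [height, hkn, if_true] at hA hB ⊢
        rcases hs k A with ha | ha | ha <;> rcases hs k B with hb | hb | hb <;>
          norm_num [ha, hb] at hP <;>
            norm_num [ha, hb] at hA hB <;>
            norm_num [ha, hb] <;> grind
      · exact absurd hm2 (hm m (by omega))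
  have pos : ∀ K < n, 0 ≤ s K A ∧ s K B ≤ 0 → ∀ k ≤ n + 1, K < k →
      0 ≤ height s f n k A - height s f n k B ∧
      (K + 1 < k → 0 < height s f n k A - height s f n k B) := by
    intro K hK hP k hk hKk
    obtain ⟨k, rfl⟩ : ∃ l, k = l + 1 := ⟨k - 1, by omega⟩
    by_cases hkn : k < n
    · have hA := height_sign hs hf hkn A
      have hB := height_sign hs hf hkn B
      rcases key (k + 1) (by omega) with ⟨h1, -⟩ | ⟨-, h2⟩
      · exact absurd hP (h1 K hKk)
      · have hM := fun hlt => h K k hlt hkn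
        rcases Nat.lt_succ_iff_lt_or_eq.1 hKk with hlt | rfl
        · replace hM := hM hlt
          simp only [height, hkn, if_true] at hA hB ⊢
          rcases hs k A with ha | ha | ha <;> rcases hs k B with hb | hb | hb <;>
            norm_num [ha, hb, hP] at hM <;>
            norm_num [ha, hb, hP] at hA hB <;>
            norm_num [ha, hb, hP] <;> grind
        · simp only [height, hkn, if_true] at hA hB ⊢
          rcases hs K A with ha | ha | ha <;> rcases hs K B with hb | hb | hb <;>
            norm_num [ha, hb] at hP <;>
            norm_num [ha, hb] at hA hB <;>
            norm_num [ha, hb] <;> grind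
    · simp only [height, hkn, if_false]
      constructor
      · linarith
      · intro; linarith
  classical
  by_cases hex : ∃ m, m < n ∧ 0 ≤ s m A ∧ s m B ≤ 0
  · obtain ⟨h1, h2⟩ := Nat.find_spec hex
    refine ⟨Nat.find hex, h1.le, neg _ h1.le fun m hm hP => Nat.find_min hex hm ⟨by omega, hP⟩,
      (pos _ h1 h2 _ (by omega) (by omega)).1, fun k hk hlt => (pos _ h1 h2 k hk (by omega)).2 hlt⟩
  · push Not at hex
    refine ⟨n, le_rfl, neg n le_rfl fun m hm hP => absurd (hex m hm hP.1) (by linarith [hP.2]),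
      ?_, fun k hk hlt => by omega⟩
    simp only [height, lt_irrefl, if_false]
    linarith

/-- Prescribed sides over the vertices `1, …, n`, compatible with a linear order of the curves,
are realized by continuous curves of which any two cross exactly once. -/
theorem exists_curves (hs : ∀ k A, s k A = -1 ∨ s k A = 0 ∨ s k A = 1)
    (hf : ∀ A, |f A| < 1) (hinj : Function.Injective f) (n : ℕ)
    (h : ∀ A B, f A < f B → ∀ m m', m < m' → m' < n →
      ¬ (0 ≤ s m A ∧ s m B ≤ 0 ∧ s m' A ≤ 0 ∧ 0 ≤ s m' B)) :
    ∃ p : α → ℝ → ℝ, (∀ A, Continuous (p A)) ∧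
      (∀ A, ∀ k < n, (p A (k + 1) = 0 ↔ s k A = 0) ∧ (0 < p A (k + 1) ↔ s k A = 1)) ∧
      ∀ A B, A ≠ B → ∃ t, p A t = p B t ∧
        ∀ r u, r < t → t < u → (p A r - p B r) * (p A u - p B u) < 0 := by
  have main : ∀ A B, f A < f B → ∃ t,
      interp (n + 1) (height s f n · A) t = interp (n + 1) (height s f n · B) t ∧
      ∀ r u, r < t → t < u →
        (interp (n + 1) (height s f n · A) r - interp (n + 1) (height s f n · B) r) *
        (interp (n + 1) (height s f n · A) u - interp (n + 1) (height s f n · B) u) < 0 := by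
    intro A B hAB
    obtain ⟨K, hK, h1, h2, h3⟩ := height_crossing hs hf hAB (h A B hAB)
    have hN : 0 < height s f n (n + 1) A - height s f n (n + 1) B := by
      simp only [height, lt_irrefl, if_false]
      linarith
    obtain ⟨t, ht, hl, hr⟩ := interp_crossing (N := n + 1) (by omega) h1 h2 h3 hN
    refine ⟨t, ?_, fun r u hrt htu => ?_⟩
    · rw [← sub_eq_zero, interp_sub, ht]
    · simp only [interp_sub]
      exact mul_neg_of_neg_of_pos (hl r hrt) (hr u htu)
  refine ⟨fun A => interp (n + 1) (height s f n · A), fun A => continuous_interp _ _, ?_, ?_⟩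
  · intro A k hk
    have := interp_natCast (N := n + 1) (k := k + 1) (by omega) (height s f n · A)
    push_cast at this
    simp only [this]
    exact height_sign hs hf hk A
  · intro A B hne
    rcases lt_or_gt_of_ne (hinj.ne hne) with hlt | hlt
    · exact main A B hlt
    · obtain ⟨t, ht, h'⟩ := main B A hlt
      exact ⟨t, ht.symm, fun r u hr hu => by linarith [h' r u hr hu]⟩

end Sweep

namespace Sig

variable {n : ℕ}

theorem side_mem (σ : Fin n → Fin n → Fin n → Bool) (m i j : Fin n) :
    side σ m i j = -1 ∨ side σ m i j = 0 ∨ side σ m i j = 1 := by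
  unfold side
  split_ifs <;> simp

theorem side_eq_zero_iff (σ : Fin n → Fin n → Fin n → Bool) (m i j : Fin n) :
    side σ m i j = 0 ↔ m = i ∨ m = j := by
  unfold side
  split_ifs <;> simp_all

theorem side_eq_one_iff (σ : Fin n → Fin n → Fin n → Bool) {i m j : Fin n} (him : i < m)
    (hmj : m < j) : side σ m i j = 1 ↔ σ i m j = true := by
  unfold side
  rw [if_neg (by simp [him.ne', hmj.ne]), if_neg him.not_gt, if_pos hmj]
  split_ifs with h <;> norm_num [h]

/-- A family of pseudolines through the pairs of points `(k + 1, 0)` with sides given by `σ`. -/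
theorem MonotoneForms.exists_pseudolines {σ : Fin n → Fin n → Fin n → Bool}
    (hσ : MonotoneForms σ) :
    ∃ p : Fin n → Fin n → ℝ → ℝ, (∀ i j, i < j → Continuous (p i j)) ∧
      (∀ i j m : Fin n, i < j → (p i j (m + 1) = 0 ↔ side σ m i j = 0) ∧
        (0 < p i j (m + 1) ↔ side σ m i j = 1)) ∧
      ∀ i j k l : Fin n, i < j → k < l → (i, j) ≠ (k, l) → ∃ t, p i j t = p k l t ∧
        ∀ r u, r < t → t < u → (p i j r - p k l r) * (p i j u - p k l u) < 0 := by
  obtain ⟨f, hf, ho, hinj⟩ := exists_isLeftOrder σ hσ n le_rfl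
  obtain ⟨p, hc, hsign, hcross⟩ := exists_curves
    (α := {q : Fin n × Fin n // q.1 < q.2})
    (s := fun k q => if h : k < n then side σ ⟨k, h⟩ q.1.1 q.1.2 else 0)
    (f := fun q => f q.1.1 q.1.2)
    (fun k q => by
      split_ifs
      exacts [side_mem σ _ _ _, Or.inr (Or.inl rfl)])
    (fun q => hf _ _)
    (fun q q' h => by
      obtain ⟨h1, h2⟩ := hinj _ _ _ _ q.2 q'.2 q.1.2.2 q'.1.2.2 h
      exact Subtype.ext (Prod.ext h1 h2)) n
    (fun q q' hlt m m' hm hm' => by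
      rw [dif_pos (hm.trans hm'), dif_pos (hm.trans hm'), dif_pos hm', dif_pos hm']
      rintro ⟨h1, h2, h3, h4⟩
      have hmm : (⟨m, hm.trans hm'⟩ : Fin n) < ⟨m', hm'⟩ := hm
      have h5 := (le_of_side σ hσ f ho q.2 hmm).1 h1 h3
      have h6 := (le_of_side σ hσ f ho q'.2 hmm).2 h2 h4
      linarith)
  refine ⟨fun i j => if h : i < j then p ⟨(i, j), h⟩ else 0, ?_, ?_, ?_⟩
  · intro i j hij
    simpa [hij] using hc _
  · intro i j m hij
    simpa [hij] using hsign ⟨(i, j), hij⟩ m m.2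
  · intro i j k l hij hkl hne
    simpa [hij, hkl] using hcross ⟨(i, j), hij⟩ ⟨(k, l), hkl⟩ (by simpa using hne)

theorem MonotoneForms.exists_drawing {σ : Fin n → Fin n → Fin n → Bool}
    (hσ : MonotoneForms σ) : ∃ D : XMonotoneDrawing n, D.Pseudolinear ∧ D.Realizes σ := by
  obtain ⟨p, hc, hsign, hcross⟩ := hσ.exists_pseudolines
  refine ⟨{
    x := fun m => (m : ℝ) + 1
    x_strictMono := fun a b hab => by simpa using hab
    e := p
    cont := fun i j hij => (hc i j hij).continuousOn
    end_left := fun i j hij => (hsign i j i hij).1.2 ((side_eq_zero_iff ..).2 (Or.inl rfl))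
    end_right := fun i j hij => (hsign i j j hij).1.2 ((side_eq_zero_iff ..).2 (Or.inr rfl))
    avoid_vertex := fun i m j him hmj h0 => by
      have := (side_eq_zero_iff σ m i j).1 ((hsign i j m (him.trans hmj)).1.1 h0)
      rcases this with h | h
      exacts [him.ne' h, hmj.ne h]
    cross_finite := fun i j k l hij hkl hne => by
      obtain ⟨t, -, ht⟩ := hcross i j k l hij hkl hne
      refine (Set.finite_singleton t).subset fun t' ht' => ?_
      by_contra h
      rcases lt_or_gt_of_ne h with h | h
      · simpa [ht'.2.2] using ht t' (t + 1) h (by linarith)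
      · simpa [ht'.2.2] using ht (t - 1) t' (by linarith) h
    sign_change := fun i j k l hij hkl hne t' _ _ ht' => by
      obtain ⟨t, -, ht⟩ := hcross i j k l hij hkl hne
      obtain rfl : t' = t := by
        by_contra h
        rcases lt_or_gt_of_ne h with h | h
        · simpa [ht'] using ht t' (t + 1) h (by linarith)
        · simpa [ht'] using ht (t - 1) t' (by linarith) h
      exact ⟨1, one_pos, fun s _ _ hs u _ hu _ => ht s u hs hu⟩ }, ?_, ?_⟩
  · refine ⟨p, hc, fun _ _ _ _ _ => rfl, fun i j m hij hi hj h0 => ?_, hcross⟩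
    rcases (side_eq_zero_iff σ m i j).1 ((hsign i j m hij).1.1 h0) with h | h
    exacts [hi h, hj h]
  · intro i j k hij hjk
    have h1 := (hsign i k j (hij.trans hjk)).2
    rw [side_eq_one_iff σ hij hjk] at h1
    rw [XMonotoneDrawing.sig]
    split_ifs with h
    · exact (h1.1 h).symm
    · exact (Bool.eq_false_iff.2 fun ht => h (h1.2 ht)).symm

/-- If the difference of two functions changes sign only once, at `t`, then it changes sign at
any of its zeros. -/
theorem cross_at {p q : ℝ → ℝ} {x : ℝ} (hx : p x = q x)
    (h : ∃ t, p t = q t ∧ ∀ s u, s < t → t < u → (p s - q s) * (p u - q u) < 0) :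
    ∀ s u, s < x → x < u → (p s - q s) * (p u - q u) < 0 := by
  obtain ⟨t, -, ht⟩ := h
  obtain rfl : x = t := by
    by_contra hne
    rcases lt_or_gt_of_ne hne with h | h
    · simpa [hx] using ht x (t + 1) h (by linarith)
    · simpa [hx] using ht (t - 1) x (by linarith) h
  exact ht

theorem monotoneForms_of_realizes {σ : Fin n → Fin n → Fin n → Bool} {D : XMonotoneDrawing n}
    (hD : D.Pseudolinear) (hσ : D.Realizes σ) : MonotoneForms σ := by
  obtain ⟨p, -, he, hne, hcross⟩ := hD
  have hx := D.x_strictMono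
  have pl : ∀ i j, i < j → p i j (D.x i) = 0 := fun i j hij => by
    rw [he i j hij _ ⟨le_rfl, (hx hij).le⟩, D.end_left i j hij]
  have pr : ∀ i j, i < j → p i j (D.x j) = 0 := fun i j hij => by
    rw [he i j hij _ ⟨(hx hij).le, le_rfl⟩, D.end_right i j hij]
  have mid : ∀ i j k, i < j → j < k → (0 < p i k (D.x j) ↔ σ i j k = true) := by
    intro i j k hij hjk
    rw [he i k (hij.trans hjk) _ ⟨(hx hij).le, (hx hjk).le⟩, ← hσ i j k hij hjk,
      XMonotoneDrawing.sig]
    split_ifs with h <;> simp [h]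
  have mid' : ∀ i j k, i < j → j < k → (p i k (D.x j) < 0 ↔ σ i j k = false) := by
    intro i j k hij hjk
    have h1 := mid i j k hij hjk
    have h2 := hne i k j (hij.trans hjk) hij.ne' hjk.ne
    rw [← Bool.not_eq_true, ← h1, not_lt]
    exact ⟨le_of_lt, fun h => lt_of_le_of_ne h h2⟩
  have left : ∀ i j k, i < j → j < k → 0 < p i k (D.x j) * -p j k (D.x i) := by
    intro i j k hij hjk
    have h := cross_at ((pr i k (hij.trans hjk)).trans (pr j k hjk).symm)
      (hcross i k j k (hij.trans hjk) hjk (by simp [hij.ne]))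
    have h1 := h (D.x i) (D.x k + 1) (hx (hij.trans hjk)) (by linarith)
    have h2 := h (D.x j) (D.x k + 1) (hx hjk) (by linarith)
    rw [pl i k (hij.trans hjk)] at h1
    rw [pl j k hjk] at h2
    rcases mul_neg_iff.1 h1 with h1 | h1 <;> rcases mul_neg_iff.1 h2 with h2 | h2 <;>
      first
        | (exfalso; linarith)
        | (apply mul_pos <;> linarith)
        | (apply mul_pos_of_neg_of_neg <;> linarith)
  have right : ∀ i j k, i < j → j < k → 0 < p i k (D.x j) * -p i j (D.x k) := by
    intro i j k hij hjk
    have h := cross_at ((pl i k (hij.trans hjk)).trans (pl i j hij).symm)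
      (hcross i k i j (hij.trans hjk) hij (by simp [hjk.ne']))
    have h1 := h (D.x i - 1) (D.x k) (by linarith) (hx (hij.trans hjk))
    have h2 := h (D.x i - 1) (D.x j) (by linarith) (hx hij)
    rw [pr i k (hij.trans hjk)] at h1
    rw [pr i j hij] at h2
    rcases mul_neg_iff.1 h1 with h1 | h1 <;> rcases mul_neg_iff.1 h2 with h2 | h2 <;>
      first
        | (exfalso; linarith)
        | (apply mul_pos <;> linarith)
        | (apply mul_pos_of_neg_of_neg <;> linarith)
  intro a b c d hab hbc hcd
  obtain ⟨t, -, ht⟩ := hcross a d b c (hab.trans (hbc.trans hcd)) hbc (by simp [hab.ne])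
  -- The signs of the difference of the pseudolines `ad` and `bc` over the four vertices.
  have sa : if σ a b c then 0 < p a d (D.x a) - p b c (D.x a)
      else p a d (D.x a) - p b c (D.x a) < 0 := by
    have h := left a b c hab hbc
    have h1 := mid a b c hab hbc
    have h2 := mid' a b c hab hbc
    rw [pl a d (hab.trans (hbc.trans hcd))]
    cases hv : σ a b c <;> simp only [hv] at h1 h2 ⊢ <;> simp at h1 h2 ⊢ <;> nlinarith
  have sb : if σ a b d then 0 < p a d (D.x b) - p b c (D.x b)
      else p a d (D.x b) - p b c (D.x b) < 0 := by
    have h1 := mid a b d hab (hbc.trans hcd)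
    have h2 := mid' a b d hab (hbc.trans hcd)
    rw [pl b c hbc]
    cases hv : σ a b d <;> simp only [hv] at h1 h2 ⊢ <;> simp at h1 h2 ⊢ <;> linarith
  have sc : if σ a c d then 0 < p a d (D.x c) - p b c (D.x c)
      else p a d (D.x c) - p b c (D.x c) < 0 := by
    have h1 := mid a c d (hab.trans hbc) hcd
    have h2 := mid' a c d (hab.trans hbc) hcd
    rw [pr b c hbc]
    cases hv : σ a c d <;> simp only [hv] at h1 h2 ⊢ <;> simp at h1 h2 ⊢ <;> linarith
  have sd : if σ b c d then 0 < p a d (D.x d) - p b c (D.x d)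
      else p a d (D.x d) - p b c (D.x d) < 0 := by
    have h := right b c d hbc hcd
    have h1 := mid b c d hbc hcd
    have h2 := mid' b c d hbc hcd
    rw [pr a d (hab.trans (hbc.trans hcd))]
    cases hv : σ b c d <;> simp only [hv] at h1 h2 ⊢ <;> simp at h1 h2 ⊢ <;> nlinarith
  -- No three increasing parameters carry alternating signs.
  have alt : ∀ x y z : ℝ, x < y → y < z → ∀ u v w : Bool,
      (if u then 0 < p a d x - p b c x else p a d x - p b c x < 0) →
      (if v then 0 < p a d y - p b c y else p a d y - p b c y < 0) →
      (if w then 0 < p a d z - p b c z else p a d z - p b c z < 0) → u = w → v = u := by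
    intro x y z hxy hyz u v w hu hv hw huw
    subst huw
    have key1 : ∀ r s, r < t → s < t → 0 < (p a d r - p b c r) * (p a d s - p b c s) := by
      intro r s hr hs
      have h1 := ht r (t + 1) hr (by linarith)
      have h2 := ht s (t + 1) hs (by linarith)
      rcases mul_neg_iff.1 h1 with h1 | h1 <;> rcases mul_neg_iff.1 h2 with h2 | h2 <;>
        nlinarith
    have key2 : ∀ r s, t < r → t < s → 0 < (p a d r - p b c r) * (p a d s - p b c s) := by
      intro r s hr hs
      have h1 := ht (t - 1) r (by linarith) hr
      have h2 := ht (t - 1) s (by linarith) hs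
      rcases mul_neg_iff.1 h1 with h1 | h1 <;> rcases mul_neg_iff.1 h2 with h2 | h2 <;>
        nlinarith
    by_contra hne
    have hxz : 0 < (p a d x - p b c x) * (p a d z - p b c z) := by
      cases u <;> simp at hu hw <;> nlinarith
    have hxy' : (p a d x - p b c x) * (p a d y - p b c y) < 0 := by
      cases u <;> cases v <;> simp at hu hv hne <;> nlinarith
    have hyz' : (p a d y - p b c y) * (p a d z - p b c z) < 0 := by
      cases u <;> cases v <;> simp at hu hv hw hne <;> nlinarith
    rcases lt_trichotomy y t with h | h | h
    · linarith [key1 x y (hxy.trans h) h]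
    · linarith [ht x z (by linarith) (by linarith)]
    · linarith [key2 y z h (h.trans hyz)]
  rw [plForm_iff]
  exact ⟨alt _ _ _ (hx hab) (hx hbc) _ _ _ sa sb sc,
    alt _ _ _ (hx hab) (hx (hbc.trans hcd)) _ _ _ sa sb sd,
    alt _ _ _ (hx (hab.trans hbc)) (hx hcd) _ _ _ sa sc sd,
    alt _ _ _ (hx hbc) (hx hcd) _ _ _ sb sc sd⟩

end Sig

/-- A signature function `σ` on the triples of `[n]` is realizable by
a pseudolinear x-monotone drawing of `K n` if and only if every increasing 4-tuple is of
one of the eight sign-monotone forms `++++, +++−, ++−−, +−−−, −−−−, −−−+, −−++, −+++`. -/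
theorem pseudolinear_realizable_iff_monotone_forms (n : ℕ)
    (σ : Fin n → Fin n → Fin n → Bool) :
    (∃ D : XMonotoneDrawing n, D.Pseudolinear ∧ D.Realizes σ) ↔
      ∀ a b c d : Fin n, a < b → b < c → c < d →
        Sig.PLForm (σ a b c) (σ a b d) (σ a c d) (σ b c d) := by
  exact ⟨fun ⟨_, hD, hσ⟩ => Sig.monotoneForms_of_realizes hD hσ,
    fun h => Sig.MonotoneForms.exists_drawing h⟩
end

section
/- In a simple x-monotone drawing D of K_n, the total number of crossings equals the number of 4-tuples a < b < c < d that are convex in the signature function σ_D; moreover, two non-adjacent edges of D cross only if their four endpoint indices form a convex 4-tuple in σ_D. -/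
/-- A continuous function with values of opposite signs at the ends of an interval vanishes
inside it. -/
theorem ContinuousOn.exists_zero_of_mul_neg {f : ℝ → ℝ} {s u : ℝ} (hsu : s < u)
    (hf : ContinuousOn f (Set.Icc s u)) (h : f s * f u < 0) :
    ∃ t, s < t ∧ t < u ∧ f t = 0 := by
  rcases mul_neg_iff.1 h with ⟨h1, h2⟩ | ⟨h1, h2⟩
  · obtain ⟨t, ht, h0⟩ := intermediate_value_Ioo' hsu.le hf ⟨h2, h1⟩
    exact ⟨t, ht.1, ht.2, h0⟩
  · obtain ⟨t, ht, h0⟩ := intermediate_value_Ioo hsu.le hf ⟨h1, h2⟩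
    exact ⟨t, ht.1, ht.2, h0⟩

namespace XMonotoneDrawing

variable {n : ℕ} (D : XMonotoneDrawing n) {i j k l : Fin n}

theorem crossSet_comm (i j k l : Fin n) : D.crossSet i j k l = D.crossSet k l i j := by
  ext t
  simp only [crossSet, Set.mem_ofPred_eq, max_comm (D.x i), min_comm (D.x j), eq_comm]

theorem crossCount_comm (i j k l : Fin n) : D.crossCount i j k l = D.crossCount k l i j := by
  rw [crossCount, crossSet_comm, crossCount]

theorem crossCount_eq_zero_of_le (h : j ≤ k) : D.crossCount i j k l = 0 := by
  have hx : D.x j ≤ D.x k := D.x_strictMono.monotone h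
  have : D.crossSet i j k l = ∅ := by
    ext t
    simp only [crossSet, Set.mem_ofPred_eq, max_lt_iff, lt_min_iff, Set.mem_empty_iff_false,
      iff_false]
    rintro ⟨⟨-, h1⟩, ⟨h2, -⟩, -⟩
    linarith
  rw [crossCount, this, Set.ncard_empty]

theorem crossSet_finite (hij : i < j) (hkl : k < l) (hne : (i, j) ≠ (k, l)) :
    (D.crossSet i j k l).Finite :=
  D.cross_finite i j k l hij hkl hne

theorem continuousOn_sub (hij : i < j) (hkl : k < l) {s u : ℝ}
    (hs : max (D.x i) (D.x k) ≤ s) (hu : u ≤ min (D.x j) (D.x l)) :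
    ContinuousOn (fun t => D.e i j t - D.e k l t) (Set.Icc s u) := by
  rw [max_le_iff] at hs
  rw [le_min_iff] at hu
  exact ((D.cont i j hij).mono (Set.Icc_subset_Icc hs.1 hu.1)).sub
    ((D.cont k l hkl).mono (Set.Icc_subset_Icc hs.2 hu.2))

/-- Between two parameters at which two edges lie in opposite vertical orders, they cross. -/
theorem exists_mem_crossSet (hij : i < j) (hkl : k < l) {s u : ℝ}
    (hs : max (D.x i) (D.x k) ≤ s) (hsu : s < u) (hu : u ≤ min (D.x j) (D.x l))
    (h : (D.e i j s - D.e k l s) * (D.e i j u - D.e k l u) < 0) :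
    ∃ t ∈ D.crossSet i j k l, s < t ∧ t < u := by
  obtain ⟨t, h1, h2, h3⟩ :=
    (D.continuousOn_sub hij hkl hs hu).exists_zero_of_mul_neg hsu h
  exact ⟨t, ⟨hs.trans_lt h1, h2.trans_le hu, sub_eq_zero.1 h3⟩, h1, h2⟩

/-- Edges that do not cross keep their vertical order. -/
theorem mul_nonneg_of_crossCount_eq_zero (hij : i < j) (hkl : k < l) (hne : (i, j) ≠ (k, l))
    (h0 : D.crossCount i j k l = 0) {s u : ℝ}
    (hs : max (D.x i) (D.x k) ≤ s) (hsu : s < u) (hu : u ≤ min (D.x j) (D.x l)) :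
    0 ≤ (D.e i j s - D.e k l s) * (D.e i j u - D.e k l u) := by
  by_contra! h
  obtain ⟨t, ht, -⟩ := D.exists_mem_crossSet hij hkl hs hsu hu h
  rw [crossCount, Set.ncard_eq_zero (D.crossSet_finite hij hkl hne)] at h0
  simp [h0] at ht

/-- Edges crossing at most once and in opposite vertical orders at the ends of their common
domain cross exactly once. -/
theorem crossCount_eq_one (hij : i < j) (hkl : k < l) (hne : (i, j) ≠ (k, l))
    (h1 : D.crossCount i j k l ≤ 1) {p q : ℝ}
    (hp : max (D.x i) (D.x k) = p) (hpq : p < q) (hq : min (D.x j) (D.x l) = q)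
    (h : (D.e i j p - D.e k l p) * (D.e i j q - D.e k l q) < 0) :
    D.crossCount i j k l = 1 := by
  obtain ⟨t, ht, -⟩ := D.exists_mem_crossSet hij hkl hp.le hpq hq.ge h
  have := (Set.ncard_pos (D.crossSet_finite hij hkl hne)).2 ⟨t, ht⟩
  rw [crossCount] at *
  omega

/-- Edges crossing at most once and in the same vertical order at both ends of their common
domain do not cross. -/
theorem crossCount_eq_zero (hij : i < j) (hkl : k < l) (hne : (i, j) ≠ (k, l))
    (h1 : D.crossCount i j k l ≤ 1) {p q : ℝ}
    (hp : max (D.x i) (D.x k) = p) (hq : min (D.x j) (D.x l) = q)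
    (h : 0 < (D.e i j p - D.e k l p) * (D.e i j q - D.e k l q)) :
    D.crossCount i j k l = 0 := by
  have hfin := D.crossSet_finite hij hkl hne
  rw [crossCount, Set.ncard_eq_zero hfin, Set.eq_empty_iff_forall_notMem]
  intro t ht
  have huniq : ∀ r ∈ D.crossSet i j k l, r = t := fun r hr =>
    (Set.ncard_le_one hfin).1 h1 r hr t ht
  obtain ⟨ε, hε, hsign⟩ := D.sign_change i j k l hij hkl hne t ht.1 ht.2.1 ht.2.2
  have hpt : p < t := hp ▸ ht.1
  have htq : t < q := hq ▸ ht.2.1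
  obtain ⟨s, hs, hst⟩ := exists_between (max_lt hpt (sub_lt_self t hε))
  obtain ⟨u, htu, hu⟩ := exists_between (lt_min htq (lt_add_of_pos_right t hε))
  rw [max_lt_iff] at hs
  rw [lt_min_iff] at hu
  have hneg := hsign s (hp ▸ hs.1) hs.2 hst u (hq ▸ hu.1) htu hu.2
  have hleft : 0 ≤ (D.e i j p - D.e k l p) * (D.e i j s - D.e k l s) := by
    by_contra! hc
    obtain ⟨r, hr, -, hrs⟩ := D.exists_mem_crossSet hij hkl hp.le hs.1
      (hq ▸ (hst.trans htq).le) hc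
    exact (hrs.trans hst).ne (huniq r hr)
  have hright : 0 ≤ (D.e i j u - D.e k l u) * (D.e i j q - D.e k l q) := by
    by_contra! hc
    obtain ⟨r, hr, hur, -⟩ := D.exists_mem_crossSet hij hkl
      (hp ▸ (hpt.trans htu).le) hu.1 hq.ge hc
    exact (htu.trans hur).ne' (huniq r hr)
  nlinarith [mul_nonneg hleft hright, mul_neg_of_pos_of_neg h hneg]

theorem sig_eq_true_iff (i j k : Fin n) : D.sig i j k = true ↔ 0 < D.e i k (D.x j) := by
  simp [sig]

theorem sig_eq_false_iff (hij : i < j) (hjk : j < k) :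
    D.sig i j k = false ↔ D.e i k (D.x j) < 0 := by
  have := D.avoid_vertex i j k hij hjk
  simp only [sig, Bool.ite_eq_false_distrib]
  grind

variable {D} {a b c d : Fin n}

/-- In a simple drawing the edges `{a, c}` and `{b, d}` with `a < b < c < d` cross exactly
when `σ(a, b, c) = σ(b, c, d)`. -/
theorem Simple.crossCount_interlaced (hD : D.Simple) (hab : a < b) (hbc : b < c) (hcd : c < d) :
    D.crossCount a c b d = if D.sig a b c = D.sig b c d then 1 else 0 := by
  have hne : (a, c) ≠ (b, d) := fun h => hab.ne (Prod.ext_iff.1 h).1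
  have h1 : D.crossCount a c b d ≤ 1 :=
    (hD a c b d (hab.trans hbc) (hbc.trans hcd) hne).2 (by unfold Adj; grind)
  have hp : max (D.x a) (D.x b) = D.x b := max_eq_right (D.x_strictMono hab).le
  have hq : min (D.x c) (D.x d) = D.x c := min_eq_left (D.x_strictMono hcd).le
  have hb := D.end_left b d (hbc.trans hcd)
  have hc := D.end_right a c (hab.trans hbc)
  have hzero := D.crossCount_eq_zero (hab.trans hbc) (hbc.trans hcd) hne h1 hp hq
  have hone := D.crossCount_eq_one (hab.trans hbc) (hbc.trans hcd) hne h1 hp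
    (D.x_strictMono hbc) hq
  rw [hb, hc] at hzero hone
  have tA := D.sig_eq_true_iff a b c
  have tD := D.sig_eq_true_iff b c d
  have fA := D.sig_eq_false_iff hab hbc
  have fD := D.sig_eq_false_iff hbc hcd
  cases hA : D.sig a b c <;> cases hE : D.sig b c d <;>
    simp only [hA, hE, true_iff, reduceCtorEq, if_true, if_false] at *
  · exact hone (by nlinarith)
  · exact hzero (by nlinarith)
  · exact hzero (by nlinarith)
  · exact hone (by nlinarith)

/-- In a simple drawing the edges `{a, d}` and `{b, c}` with `a < b < c < d` cross exactly
when `σ(a, b, d) ≠ σ(a, c, d)`. -/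
theorem Simple.crossCount_nested (hD : D.Simple) (hab : a < b) (hbc : b < c) (hcd : c < d) :
    D.crossCount a d b c = if D.sig a b d = D.sig a c d then 0 else 1 := by
  have hac := hab.trans hbc
  have hbd := hbc.trans hcd
  have hne : (a, d) ≠ (b, c) := fun h => hab.ne (Prod.ext_iff.1 h).1
  have h1 : D.crossCount a d b c ≤ 1 :=
    (hD a d b c (hac.trans hcd) hbc hne).2 (by unfold Adj; grind)
  have hp : max (D.x a) (D.x b) = D.x b := max_eq_right (D.x_strictMono hab).le
  have hq : min (D.x d) (D.x c) = D.x c := min_eq_right (D.x_strictMono hcd).le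
  have hb := D.end_left b c hbc
  have hc := D.end_right b c hbc
  have hzero := D.crossCount_eq_zero (hac.trans hcd) hbc hne h1 hp hq
  have hone := D.crossCount_eq_one (hac.trans hcd) hbc hne h1 hp (D.x_strictMono hbc) hq
  rw [hb, hc] at hzero hone
  have tB := D.sig_eq_true_iff a b d
  have tC := D.sig_eq_true_iff a c d
  have fB := D.sig_eq_false_iff hab hbd
  have fC := D.sig_eq_false_iff hac hcd
  cases hB : D.sig a b d <;> cases hC : D.sig a c d <;>
    simp only [hB, hC, true_iff, reduceCtorEq, if_true, if_false] at *
  · exact hzero (by nlinarith)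
  · exact hone (by nlinarith)
  · exact hone (by nlinarith)
  · exact hzero (by nlinarith)

/-- The constraint on signatures imposed by the edges `{a, c}` and `{a, d}` not crossing. -/
theorem Simple.sig_eq_of_common_left (hD : D.Simple) (hab : a < b) (hbc : b < c) (hcd : c < d)
    (h : D.sig a b c = D.sig a c d) : D.sig a b d = D.sig a c d := by
  have hac := hab.trans hbc
  have hne : (a, c) ≠ (a, d) := fun h => hcd.ne (Prod.ext_iff.1 h).2
  have hmul := D.mul_nonneg_of_crossCount_eq_zero hac (hac.trans hcd) hne
    ((hD a c a d hac (hac.trans hcd) hne).1 (Or.inl rfl)) (s := D.x b) (u := D.x c)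
    (by simpa using (D.x_strictMono hab).le) (D.x_strictMono hbc)
    (by simpa using (D.x_strictMono hcd).le)
  rw [D.end_right a c hac] at hmul
  cases hC : D.sig a c d <;> rw [hC] at h
  · rw [sig_eq_false_iff _ hac hcd] at hC
    rw [sig_eq_false_iff _ hab hbc] at h
    rw [sig_eq_false_iff _ hab (hbc.trans hcd)]
    nlinarith
  · rw [sig_eq_true_iff] at *
    nlinarith

/-- The constraint on signatures imposed by the edges `{a, d}` and `{b, d}` not crossing. -/
theorem Simple.sig_eq_of_common_right (hD : D.Simple) (hab : a < b) (hbc : b < c) (hcd : c < d)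
    (h : D.sig b c d = D.sig a b d) : D.sig a c d = D.sig a b d := by
  have hbd := hbc.trans hcd
  have hne : (a, d) ≠ (b, d) := fun h => hab.ne (Prod.ext_iff.1 h).1
  have hmul := D.mul_nonneg_of_crossCount_eq_zero (hab.trans hbd) hbd hne
    ((hD a d b d (hab.trans hbd) hbd hne).1 (Or.inr (Or.inr (Or.inr rfl))))
    (s := D.x b) (u := D.x c)
    (by simpa using (D.x_strictMono hab).le) (D.x_strictMono hbc)
    (by simpa using (D.x_strictMono hcd).le)
  rw [D.end_left b d hbd] at hmul
  cases hB : D.sig a b d <;> rw [hB] at h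
  · rw [sig_eq_false_iff _ hab hbd] at hB
    rw [sig_eq_false_iff _ hbc hcd] at h
    rw [sig_eq_false_iff _ (hab.trans hbc) hcd]
    nlinarith
  · rw [sig_eq_true_iff] at *
    nlinarith

open Classical in
/-- In a simple drawing, four vertices span one crossing if they are convex and none
otherwise. -/
theorem Simple.crossCount_add_crossCount (hD : D.Simple)
    (hab : a < b) (hbc : b < c) (hcd : c < d) :
    D.crossCount a c b d + D.crossCount a d b c =
      if Sig.Convex4 D.sig a b c d then 1 else 0 := by
  have hl := hD.sig_eq_of_common_left hab hbc hcd
  have hr := hD.sig_eq_of_common_right hab hbc hcd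
  rw [hD.crossCount_interlaced hab hbc hcd, hD.crossCount_nested hab hbc hcd, Sig.Convex4]
  generalize D.sig a b c = A at *
  generalize D.sig a b d = B at *
  generalize D.sig a c d = C at *
  generalize D.sig b c d = E at *
  cases A <;> cases B <;> cases C <;> cases E <;> simp_all [Sig.ConvexForm]

/-- In a simple drawing the sum defining `cr` splits according to the order of the four
endpoints. -/
theorem Simple.crossCount_ite (hD : D.Simple) (i j k l : Fin n) :
    (if i < j ∧ k < l ∧ (i, j) ≠ (k, l) then D.crossCount i j k l else 0) =
      (if i < k ∧ k < j ∧ j < l then D.crossCount i j k l else 0) +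
      (if i < k ∧ k < l ∧ l < j then D.crossCount i j k l else 0) +
      ((if k < i ∧ i < l ∧ l < j then D.crossCount k l i j else 0) +
      (if k < i ∧ i < j ∧ j < l then D.crossCount k l i j else 0)) := by
  rw [D.crossCount_comm k l i j]
  by_cases h : i < j ∧ k < l ∧ (i, j) ≠ (k, l)
  · obtain ⟨hij, hkl, hne⟩ := h
    rw [if_pos ⟨hij, hkl, hne⟩]
    have hadj := (hD i j k l hij hkl hne).1
    have hjk := D.crossCount_eq_zero_of_le (i := i) (j := j) (k := k) (l := l)
    have hli := D.crossCount_eq_zero_of_le (i := k) (j := l) (k := i) (l := j)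
    rw [D.crossCount_comm k l i j] at hli
    unfold Adj at hadj
    generalize D.crossCount i j k l = m at *
    split_ifs <;> grind
  · rw [if_neg h]
    split_ifs <;> grind

end XMonotoneDrawing

/-- In a simple x-monotone drawing `D` of `K n`, the total number of
crossings equals the number of increasing 4-tuples that are convex in `σ_D`; moreover,
two non-adjacent edges cross only if their four endpoint indices form a convex 4-tuple
in `σ_D`. -/
theorem simple_monotone_cr_eq_convex_count (n : ℕ) (D : XMonotoneDrawing n)
    (hD : D.Simple) :
    D.cr = {q : Fin n × Fin n × Fin n × Fin n |
        q.1 < q.2.1 ∧ q.2.1 < q.2.2.1 ∧ q.2.2.1 < q.2.2.2 ∧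
        Sig.Convex4 D.sig q.1 q.2.1 q.2.2.1 q.2.2.2}.ncard ∧
    (∀ a b c d : Fin n, a < b → b < c → c < d →
      (0 < D.crossCount a b c d ∨ 0 < D.crossCount a c b d ∨ 0 < D.crossCount a d b c) →
      Sig.Convex4 D.sig a b c d) := by
  classical
  constructor
  · set f : Fin n → Fin n → Fin n → Fin n → ℕ := fun a b c d =>
      if a < b ∧ b < c ∧ c < d then D.crossCount a c b d else 0 with hf
    set g : Fin n → Fin n → Fin n → Fin n → ℕ := fun a b c d =>
      if a < b ∧ b < c ∧ c < d then D.crossCount a d b c else 0 with hg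
    have hfg : ∀ a b c d, f a b c d + g a b c d =
        if a < b ∧ b < c ∧ c < d ∧ Sig.Convex4 D.sig a b c d then 1 else 0 := by
      intro a b c d
      by_cases h : a < b ∧ b < c ∧ c < d
      · simp only [hf, hg, h, and_self, true_and, if_true]
        exact hD.crossCount_add_crossCount h.1 h.2.1 h.2.2
      · have h' : ¬ (a < b ∧ b < c ∧ c < d ∧ Sig.Convex4 D.sig a b c d) :=
          fun h' => h ⟨h'.1, h'.2.1, h'.2.2.1⟩
        simp only [hf, hg, if_neg h, if_neg h']
    have hsplit : ∀ i j k l : Fin n,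
        (if i < j ∧ k < l ∧ (i, j) ≠ (k, l) then D.crossCount i j k l else 0) =
          f i k j l + g i k l j + (f k i l j + g k i j l) :=
      hD.crossCount_ite
    have hf1 : ∑ i, ∑ j, ∑ k, ∑ l, f i k j l = ∑ a, ∑ b, ∑ c, ∑ d, f a b c d :=
      Finset.sum_congr rfl fun i _ => Finset.sum_comm
    have hg1 : ∑ i, ∑ j, ∑ k, ∑ l, g i k l j = ∑ a, ∑ b, ∑ c, ∑ d, g a b c d :=
      Finset.sum_congr rfl fun i _ => Finset.sum_comm.trans
        (Finset.sum_congr rfl fun k _ => Finset.sum_comm)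
    have hf2 : ∑ i, ∑ j, ∑ k, ∑ l, f k i l j = ∑ a, ∑ b, ∑ c, ∑ d, f a b c d := by
      calc ∑ i, ∑ j, ∑ k, ∑ l, f k i l j = ∑ i, ∑ k, ∑ j, ∑ l, f k i l j :=
            Finset.sum_congr rfl fun i _ => Finset.sum_comm
        _ = ∑ k, ∑ i, ∑ j, ∑ l, f k i l j := Finset.sum_comm
        _ = ∑ k, ∑ i, ∑ l, ∑ j, f k i l j :=
            Finset.sum_congr rfl fun k _ => Finset.sum_congr rfl fun i _ => Finset.sum_comm
    have hg2 : ∑ i, ∑ j, ∑ k, ∑ l, g k i j l = ∑ a, ∑ b, ∑ c, ∑ d, g a b c d := by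
      calc ∑ i, ∑ j, ∑ k, ∑ l, g k i j l = ∑ i, ∑ k, ∑ j, ∑ l, g k i j l :=
            Finset.sum_congr rfl fun i _ => Finset.sum_comm
        _ = ∑ k, ∑ i, ∑ j, ∑ l, g k i j l := Finset.sum_comm
    have hcount : {q : Fin n × Fin n × Fin n × Fin n |
        q.1 < q.2.1 ∧ q.2.1 < q.2.2.1 ∧ q.2.2.1 < q.2.2.2 ∧
        Sig.Convex4 D.sig q.1 q.2.1 q.2.2.1 q.2.2.2}.ncard =
          ∑ a, ∑ b, ∑ c, ∑ d, (f a b c d + g a b c d) := by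
      rw [Set.ncard_eq_toFinset_card', Set.toFinset_ofPred, Finset.card_filter]
      simp only [Fintype.sum_prod_type, hfg]
    rw [hcount, XMonotoneDrawing.cr]
    simp only [Fintype.sum_prod_type, hsplit, Finset.sum_add_distrib, hf1, hg1, hf2, hg2]
    omega
  · intro a b c d hab hbc hcd h
    have hsum := hD.crossCount_add_crossCount hab hbc hcd
    rw [D.crossCount_eq_zero_of_le hbc.le] at h
    by_contra hconv
    rw [if_neg hconv] at hsum
    omega
end

section
/- Let σ be an admissible signature function on the triples of [n]. Then the number of 4-tuples a < b < c < d that are convex in σ is at least Z(n). -/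
namespace SignatureCount

open Finset

/-- Whether the vertex `m` lies on the left of the edge `{i, j}`, where `i < j`, for a signature
function `τ` indexed by natural numbers; meaningful only for `m ≠ i` and `m ≠ j`. -/
def side (τ : ℕ → ℕ → ℕ → Bool) (i j m : ℕ) : Bool :=
  if m < i then τ m i j else if m < j then !τ i m j else τ i j m

/-- The number of vertices below `n` lying on side `s` of the edge `{i, j}`. -/
def sideCount (τ : ℕ → ℕ → ℕ → Bool) (n i j : ℕ) (s : Bool) : ℕ :=
  #{m ∈ range n | m ≠ i ∧ m ≠ j ∧ side τ i j m = s}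

/-- The number `E_{≤≤k-1}` of the restriction of `τ` to the vertices below `n`: an edge having
`ℓ` vertices on a given side contributes `k - ℓ` (truncated) for that side. -/
def weight (τ : ℕ → ℕ → ℕ → Bool) (n k : ℕ) : ℕ :=
  ∑ j ∈ range n, ∑ i ∈ range j, ∑ s : Bool, (k - sideCount τ n i j s)

/-- Admissibility of a signature function on the vertices below `n`. -/
def AdmissibleBelow (τ : ℕ → ℕ → ℕ → Bool) (n : ℕ) : Prop :=
  ∀ a b c d, a < b → b < c → c < d → d < n →
    Sig.AllowedForm (τ a b c) (τ a b d) (τ a c d) (τ b c d)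

/-- In a transitive tournament the ranks of the vertices are `0, 1, …, #S - 1`, once each. -/
theorem sum_rank {M : Type*} [AddCommMonoid M] (S : Finset ℕ) (r : ℕ → ℕ → Bool)
    (hanti : ∀ x ∈ S, ∀ y ∈ S, x ≠ y → r y x = !r x y)
    (htrans : ∀ x ∈ S, ∀ y ∈ S, ∀ z ∈ S, x ≠ y → y ≠ z → x ≠ z →
      r x y = true → r y z = true → r x z = true) (g : ℕ → M) :
    ∑ x ∈ S, g #{y ∈ S | y ≠ x ∧ r y x = true} = ∑ t ∈ range #S, g t := by
  have hlt : ∀ x ∈ S, ∀ y ∈ S, x ≠ y → r x y = true →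
      #{z ∈ S | z ≠ x ∧ r z x = true} < #{z ∈ S | z ≠ y ∧ r z y = true} := by
    intro x hx y hy hxy h
    apply card_lt_card
    rw [ssubset_iff_of_subset]
    · exact ⟨x, by simp [hx, hxy, h], by simp⟩
    · intro z hz
      simp only [mem_filter] at hz ⊢
      have hzy : z ≠ y := by
        rintro rfl
        have := hanti x hx z hy hxy
        simp_all
      exact ⟨hz.1, hzy, htrans z hz.1 x hx y hy hz.2.1 hxy hzy hz.2.2 h⟩
  have hinj : Set.InjOn (fun x => #{y ∈ S | y ≠ x ∧ r y x = true}) S := by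
    intro x hx y hy hxy
    by_contra hne
    cases h : r x y with
    | true => exact (hlt x hx y hy hne h).ne hxy
    | false =>
      have := hanti x hx y hy hne
      rw [h] at this
      exact (hlt y hy x hx (Ne.symm hne) this).ne' hxy
  have himage : S.image (fun x => #{y ∈ S | y ≠ x ∧ r y x = true}) = range #S := by
    apply eq_of_subset_of_card_le
    · intro t ht
      obtain ⟨x, hx, rfl⟩ := mem_image.1 ht
      rw [mem_range]
      apply card_lt_card
      rw [ssubset_iff_of_subset (filter_subset _ _)]
      exact ⟨x, hx, by simp⟩
    · rw [card_image_of_injOn hinj, card_range]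
  rw [← himage, sum_image hinj]

theorem AdmissibleBelow.mono {τ : ℕ → ℕ → ℕ → Bool} {m n : ℕ} (h : AdmissibleBelow τ n)
    (hmn : m ≤ n) : AdmissibleBelow τ m :=
  fun a b c d hab hbc hcd hd => h a b c d hab hbc hcd (hd.trans_le hmn)

theorem AdmissibleBelow.eq_or_eq_of_first {τ : ℕ → ℕ → ℕ → Bool} {n a b c d : ℕ}
    (h : AdmissibleBelow τ n) (hab : a < b) (hbc : b < c) (hcd : c < d) (hd : d < n) :
    τ a b d = τ a b c ∨ τ a b d = τ a c d := by
  have := h a b c d hab hbc hcd hd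
  revert this
  generalize τ a b c = p, τ a b d = q, τ a c d = r, τ b c d = s
  unfold Sig.AllowedForm
  revert p q r s
  decide

theorem AdmissibleBelow.eq_or_eq_of_last {τ : ℕ → ℕ → ℕ → Bool} {n a b c d : ℕ}
    (h : AdmissibleBelow τ n) (hab : a < b) (hbc : b < c) (hcd : c < d) (hd : d < n) :
    τ a c d = τ a b d ∨ τ a c d = τ b c d := by
  have := h a b c d hab hbc hcd hd
  revert this
  generalize τ a b c = p, τ a b d = q, τ a c d = r, τ b c d = s
  unfold Sig.AllowedForm
  revert p q r s
  decide

theorem side_swap_right {τ : ℕ → ℕ → ℕ → Bool} {i x y : ℕ} (hx : i < x) (hy : i < y)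
    (hxy : x ≠ y) : side τ i x y = !side τ i y x := by
  unfold side
  grind

theorem side_swap_left {τ : ℕ → ℕ → ℕ → Bool} {n x y : ℕ} (hx : x < n) (hy : y < n)
    (hxy : x ≠ y) : side τ x n y = !side τ y n x := by
  unfold side
  grind

theorem side_trans_right {τ : ℕ → ℕ → ℕ → Bool} {n i x y z : ℕ} {s : Bool}
    (h : AdmissibleBelow τ n) (hx : i < x) (hy : i < y) (hz : i < z)
    (hxn : x < n) (hyn : y < n) (hzn : z < n) (hxy : x ≠ y) (hyz : y ≠ z) (hxz : x ≠ z)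
    (h₁ : side τ i y x = s) (h₂ : side τ i z y = s) : side τ i z x = s := by
  have key := fun {b c d} => @AdmissibleBelow.eq_or_eq_of_first τ n i b c d h
  unfold side at *
  rcases lt_or_gt_of_ne hxy with h1 | h1 <;> rcases lt_or_gt_of_ne hyz with h2 | h2 <;>
    rcases lt_or_gt_of_ne hxz with h3 | h3 <;> cases s <;> grind

theorem side_trans_left {τ : ℕ → ℕ → ℕ → Bool} {n x y z : ℕ} {s : Bool}
    (h : AdmissibleBelow τ (n + 1)) (hxn : x < n) (hyn : y < n) (hzn : z < n)
    (hxy : x ≠ y) (hyz : y ≠ z) (hxz : x ≠ z)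
    (h₁ : side τ y n x = s) (h₂ : side τ z n y = s) : side τ z n x = s := by
  have key := fun {a b c} => @AdmissibleBelow.eq_or_eq_of_last τ (n + 1) a b c n h
  unfold side at *
  rcases lt_or_gt_of_ne hxy with h1 | h1 <;> rcases lt_or_gt_of_ne hyz with h2 | h2 <;>
    rcases lt_or_gt_of_ne hxz with h3 | h3 <;> cases s <;> grind

theorem sum_range_tsub (k : ℕ) : ∑ t ∈ range k, (k - t) = (k + 1).choose 2 := by
  induction k with
  | zero => rfl
  | succ k ih =>
    rw [sum_range_succ', Nat.choose_succ_succ' (k + 1) 1]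
    simp only [Nat.add_sub_add_right, ih, Nat.choose_one_right, Nat.sub_zero,
      Nat.reduceAdd]
    omega

/-- The edges at the last vertex `n` contribute at least `2 * choose (k + 1) 2` to the weight. -/
theorem last_vertex_weight {τ : ℕ → ℕ → ℕ → Bool} {n k : ℕ} (h : AdmissibleBelow τ (n + 1))
    (hk : k ≤ n) :
    2 * (k + 1).choose 2 ≤ ∑ i ∈ range n, ∑ s : Bool, (k - sideCount τ (n + 1) i n s) := by
  rw [sum_comm]
  have hs : ∀ s : Bool, (k + 1).choose 2 ≤ ∑ i ∈ range n, (k - sideCount τ (n + 1) i n s) := by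
    intro s
    have hrank := sum_rank (range n) (fun x y => side τ y n x == s)
      (by
        intro x hx y hy hxy
        have := side_swap_left (τ := τ) (mem_range.1 hx) (mem_range.1 hy) hxy
        simp only [this]
        cases s <;> simp)
      (by
        intro x hx y hy z hz hxy hyz hxz h1 h2
        simp only [mem_range, beq_iff_eq] at *
        exact side_trans_left h hx hy hz hxy hyz hxz h1 h2)
      (fun t => k - t)
    have hcount : ∀ i ∈ range n, sideCount τ (n + 1) i n s =
        #{y ∈ range n | y ≠ i ∧ (side τ i n y == s) = true} := by
      intro i _
      unfold sideCount
      congr 1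
      ext y
      simp only [mem_filter, mem_range, beq_iff_eq]
      grind
    rw [sum_congr rfl fun i hi => by rw [hcount i hi], hrank, card_range, ← sum_range_tsub]
    exact sum_le_sum_of_subset (by simpa using hk)
  rw [Fintype.sum_bool]
  linarith [hs true, hs false]

/-- Among the edges from `i` to a vertex between `i` and `n`, at least `k + 1 - i` have at most
`k` vertices on the side not containing `n`. -/
theorem invariant_edges {τ : ℕ → ℕ → ℕ → Bool} {n k i : ℕ} (h : AdmissibleBelow τ (n + 1))
    (hk : 2 * (k + 1) ≤ n) (hi : i < k + 1) :
    k + 1 - i ≤ ∑ j ∈ Ioo i n, ∑ s : Bool,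
      if side τ i j n ≠ s ∧ sideCount τ n i j s ≤ k then 1 else 0 := by
  rw [sum_comm]
  have hs : ∀ s : Bool, min (k + 1 - i) #{w ∈ Ioo i n | side τ i w n ≠ s} ≤
      ∑ j ∈ Ioo i n, if side τ i j n ≠ s ∧ sideCount τ n i j s ≤ k then 1 else 0 := by
    intro s
    set U := {w ∈ Ioo i n | side τ i w n ≠ s} with hU
    have hmem : ∀ x ∈ U, i < x ∧ x < n ∧ side τ i x n ≠ s := by
      intro x hx
      simpa [hU, and_assoc] using hx
    have hrank := sum_rank U (fun x y => side τ i y x == s)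
      (by
        intro x hx y hy hxy
        have := side_swap_right (τ := τ) (hmem x hx).1 (hmem y hy).1 hxy
        simp only [this]
        cases s <;> simp)
      (by
        intro x hx y hy z hz hxy hyz hxz h1 h2
        simp only [beq_iff_eq] at *
        have hx := hmem x hx
        have hy := hmem y hy
        have hz := hmem z hz
        exact side_trans_right h hx.1 hy.1 hz.1 (by omega) (by omega) (by omega)
          hxy hyz hxz h1 h2)
      (fun t => if t < k + 1 - i then 1 else 0)
    have hmin : min (k + 1 - i) #U = ∑ t ∈ range #U, if t < k + 1 - i then 1 else 0 := by
      rw [← sum_filter, ← card_eq_sum_ones]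
      have : {t ∈ range #U | t < k + 1 - i} = range (min (k + 1 - i) #U) := by
        ext t
        simp [and_comm]
      rw [this, card_range]
    rw [hmin, ← hrank]
    have hle : ∀ w ∈ U, sideCount τ n i w s ≤
        i + #{y ∈ U | y ≠ w ∧ (side τ i w y == s) = true} := by
      intro w hw
      have hsub : {m ∈ range n | m ≠ i ∧ m ≠ w ∧ side τ i w m = s} ⊆
          range i ∪ {y ∈ U | y ≠ w ∧ (side τ i w y == s) = true} := by
        intro y hy
        simp only [mem_filter, mem_range, mem_union, beq_iff_eq] at hy ⊢
        rcases lt_or_ge y i with hyi | hyi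
        · exact Or.inl hyi
        · refine Or.inr ⟨?_, hy.2.2⟩
          have hw := hmem w hw
          have hiy : i < y := lt_of_le_of_ne hyi (Ne.symm hy.2.1)
          simp only [hU, mem_filter, mem_Ioo]
          refine ⟨⟨hiy, hy.1⟩, fun hyn => hw.2.2 ?_⟩
          have hyw := side_swap_right (τ := τ) hiy hw.1 hy.2.2.1
          have hwn := side_swap_right (τ := τ) hw.1 (hw.1.trans hw.2.1) hw.2.1.ne
          by_contra hne
          have : side τ i y w = s := side_trans_right h hw.1 (hw.1.trans hw.2.1) hiy
            (by omega) (by omega) (by omega) hw.2.1.ne hy.1.ne' hy.2.2.1.symm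
            (by grind) hyn
          grind
      calc sideCount τ n i w s ≤ _ := card_le_card hsub
        _ ≤ _ := (card_union_le _ _).trans (by rw [card_range])
    rw [← sum_filter_add_sum_filter_not (Ioo i n) (fun w => side τ i w n ≠ s)]
    refine le_add_right (sum_le_sum fun w hw => ?_)
    have h1 := hle w hw
    have h2 := (hmem w hw).2.2
    split_ifs <;> grind
  have hcard : #{w ∈ Ioo i n | side τ i w n ≠ true} + #{w ∈ Ioo i n | side τ i w n ≠ false} =
      n - i - 1 := by
    rw [← Nat.card_Ioo, ← card_filter_add_card_filter_not (s := Ioo i n) (side τ i · n ≠ true)]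
    simp
  rw [Fintype.sum_bool]
  have h1 := hs true
  have h2 := hs false
  omega

theorem sideCount_succ {τ : ℕ → ℕ → ℕ → Bool} {n i j : ℕ} (s : Bool) (hi : i < n) (hj : j < n) :
    sideCount τ (n + 1) i j s = sideCount τ n i j s + if side τ i j n = s then 1 else 0 := by
  unfold sideCount
  rw [range_add_one, filter_insert]
  split_ifs with h1 h2 h2
  · rw [card_insert_of_notMem (by simp)]
  · exact absurd h1.2.2 h2
  · exact absurd ⟨hi.ne', hj.ne', h2⟩ h1
  · rfl

theorem weight_ge {τ : ℕ → ℕ → ℕ → Bool} (k : ℕ) : ∀ n, 2 * k + 1 ≤ n → AdmissibleBelow τ n →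
    3 * (k + 2).choose 3 ≤ weight τ n k := by
  induction k with
  | zero => simp
  | succ k ih =>
    intro n hn h
    obtain ⟨n, rfl⟩ : ∃ m, n = m + 1 := ⟨n - 1, by omega⟩
    have hprev := ih n (by omega) (h.mono n.le_succ)
    have hlast := last_vertex_weight (k := k + 1) h (by omega)
    have hinv : (k + 2).choose 2 ≤ ∑ j ∈ range n, ∑ i ∈ range j, ∑ s : Bool,
        if side τ i j n ≠ s ∧ sideCount τ n i j s ≤ k then 1 else 0 := by
      rw [sum_comm' (s' := fun i => Ioo i n) (t' := range n)
        (by intro x y; simp only [mem_range, mem_Ioo]; omega), ← sum_range_tsub]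
      refine le_trans (sum_le_sum fun i hi => invariant_edges h (by omega) (mem_range.1 hi))
        (sum_le_sum_of_subset ?_)
      rw [range_subset_range]
      omega
    have hstep : weight τ (n + 1) (k + 1) = weight τ n k +
        (∑ j ∈ range n, ∑ i ∈ range j, ∑ s : Bool,
          if side τ i j n ≠ s ∧ sideCount τ n i j s ≤ k then 1 else 0) +
        ∑ i ∈ range n, ∑ s : Bool, (k + 1 - sideCount τ (n + 1) i n s) := by
      unfold weight
      rw [sum_range_succ]
      congr 1
      simp only [← sum_add_distrib]
      refine sum_congr rfl fun j hj => sum_congr rfl fun i hi => sum_congr rfl fun s _ => ?_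
      rw [mem_range] at hi hj
      rw [sideCount_succ s (hi.trans hj) hj]
      split_ifs <;> grind
    have hchoose : (k + 3).choose 3 = (k + 2).choose 2 + (k + 2).choose 3 :=
      Nat.choose_succ_succ' _ _
    change 3 * (k + 3).choose 3 ≤ _
    change 2 * (k + 2).choose 2 ≤ _ at hlast
    omega

/-- The sum of `f` over all quadruples of vertices below `n`. -/
def quadSum (n : ℕ) (f : ℕ → ℕ → ℕ → ℕ → ℕ) : ℕ :=
  ∑ a ∈ range n, ∑ b ∈ range n, ∑ c ∈ range n, ∑ d ∈ range n, f a b c d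

/-- The sum of `f` over all increasing quadruples of vertices below `n`. -/
def increasingSum (n : ℕ) (f : ℕ → ℕ → ℕ → ℕ → ℕ) : ℕ :=
  quadSum n fun a b c d => if a < b ∧ b < c ∧ c < d then f a b c d else 0

theorem quadSum_swap_first (n : ℕ) (f : ℕ → ℕ → ℕ → ℕ → ℕ) :
    quadSum n (fun a b c d => f b a c d) = quadSum n f :=
  sum_comm

theorem quadSum_swap_middle (n : ℕ) (f : ℕ → ℕ → ℕ → ℕ → ℕ) :
    quadSum n (fun a b c d => f a c b d) = quadSum n f :=
  sum_congr rfl fun _ _ => sum_comm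

theorem quadSum_swap_last (n : ℕ) (f : ℕ → ℕ → ℕ → ℕ → ℕ) :
    quadSum n (fun a b c d => f a b d c) = quadSum n f :=
  sum_congr rfl fun _ _ => sum_congr rfl fun _ _ => sum_comm

theorem quadSum_add (n : ℕ) (f g : ℕ → ℕ → ℕ → ℕ → ℕ) :
    quadSum n (fun a b c d => f a b c d + g a b c d) = quadSum n f + quadSum n g := by
  simp only [quadSum, sum_add_distrib]

theorem increasingSum_add (n : ℕ) (f g : ℕ → ℕ → ℕ → ℕ → ℕ) :
    increasingSum n (fun a b c d => f a b c d + g a b c d) =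
      increasingSum n f + increasingSum n g := by
  unfold increasingSum
  rw [← quadSum_add]
  congr with a b c d
  split_ifs <;> rfl

theorem increasingSum_congr {n : ℕ} {f g : ℕ → ℕ → ℕ → ℕ → ℕ}
    (h : ∀ a b c d, a < b → b < c → c < d → d < n → f a b c d = g a b c d) :
    increasingSum n f = increasingSum n g := by
  unfold increasingSum quadSum
  refine sum_congr rfl fun a _ => sum_congr rfl fun b _ => sum_congr rfl fun c _ =>
    sum_congr rfl fun d hd => ?_
  beta_reduce
  split_ifs with hlt
  · exact h a b c d hlt.1 hlt.2.1 hlt.2.2 (mem_range.1 hd)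
  · rfl

/-- Two disjoint increasing pairs interleave in one of six ways. -/
theorem quadSum_disjoint_pairs (n : ℕ) (f : ℕ → ℕ → ℕ → ℕ → ℕ) :
    quadSum n (fun i j x y =>
      if i < j ∧ x < y ∧ x ≠ i ∧ x ≠ j ∧ y ≠ i ∧ y ≠ j then f i j x y else 0) =
    increasingSum n fun a b c d =>
      f a b c d + f a c b d + f a d b c + f b c a d + f b d a c + f c d a b := by
  have swap_acbd := quadSum_swap_middle n
  have swap_adbc : ∀ g : ℕ → ℕ → ℕ → ℕ → ℕ,
      quadSum n (fun a b c d => g a d b c) = quadSum n g := fun g =>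
    (quadSum_swap_last n fun a b c d => g a c b d).trans (swap_acbd g)
  have swap_bcad : ∀ g : ℕ → ℕ → ℕ → ℕ → ℕ,
      quadSum n (fun a b c d => g b c a d) = quadSum n g := fun g =>
    (quadSum_swap_first n fun a b c d => g a c b d).trans (swap_acbd g)
  have swap_bdac : ∀ g : ℕ → ℕ → ℕ → ℕ → ℕ,
      quadSum n (fun a b c d => g b d a c) = quadSum n g := fun g =>
    (quadSum_swap_first n fun a b c d => g a d b c).trans (swap_adbc g)
  have swap_cdab : ∀ g : ℕ → ℕ → ℕ → ℕ → ℕ,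
      quadSum n (fun a b c d => g c d a b) = quadSum n g := fun g =>
    (quadSum_swap_middle n fun a b c d => g b d a c).trans (swap_bdac g)
  simp only [increasingSum_add]
  unfold increasingSum
  rw [swap_acbd fun i j x y => if i < x ∧ x < j ∧ j < y then f i j x y else 0,
    swap_adbc fun i j x y => if i < x ∧ x < y ∧ y < j then f i j x y else 0,
    swap_bcad fun i j x y => if x < i ∧ i < j ∧ j < y then f i j x y else 0,
    swap_bdac fun i j x y => if x < i ∧ i < y ∧ y < j then f i j x y else 0,
    swap_cdab fun i j x y => if x < y ∧ y < i ∧ i < j then f i j x y else 0]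
  simp only [← quadSum_add]
  congr! 5 with i j x y
  generalize f i j x y = v
  split_ifs <;> omega

theorem sum_mul_sum_eq_sum_lt (n : ℕ) (u v : ℕ → ℕ) (huv : ∀ x, u x * v x = 0) :
    (∑ x ∈ range n, u x) * ∑ y ∈ range n, v y =
      ∑ x ∈ range n, ∑ y ∈ range n, if x < y then u x * v y + u y * v x else 0 := by
  have hsplit : ∀ x y, u x * v y =
      (if x < y then u x * v y else 0) + if y < x then u x * v y else 0 := by
    intro x y
    rcases lt_trichotomy x y with h | rfl | h
    · simp [h, h.not_gt]
    · simp [huv]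
    · simp [h, h.not_gt]
  rw [sum_mul_sum]
  rw [sum_congr rfl fun x _ => sum_congr rfl fun y _ => hsplit x y]
  simp only [sum_add_distrib]
  rw [sum_comm (f := fun x y => if y < x then u x * v y else 0)]
  simp only [← sum_add_distrib]
  refine sum_congr rfl fun x _ => sum_congr rfl fun y _ => ?_
  split_ifs <;> rfl

theorem sum_sideCount_mul (τ : ℕ → ℕ → ℕ → Bool) (n : ℕ) :
    ∑ j ∈ range n, ∑ i ∈ range j, sideCount τ n i j true * sideCount τ n i j false =
      quadSum n fun i j x y => if i < j ∧ x < y ∧ x ≠ i ∧ x ≠ j ∧ y ≠ i ∧ y ≠ j then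
        if side τ i j x ≠ side τ i j y then 1 else 0 else 0 := by
  have hedge : ∀ i j, sideCount τ n i j true * sideCount τ n i j false =
      ∑ x ∈ range n, ∑ y ∈ range n, if x < y ∧ x ≠ i ∧ x ≠ j ∧ y ≠ i ∧ y ≠ j then
        if side τ i j x ≠ side τ i j y then 1 else 0 else 0 := by
    intro i j
    unfold sideCount
    rw [card_filter, card_filter, sum_mul_sum_eq_sum_lt]
    · refine sum_congr rfl fun x _ => sum_congr rfl fun y _ => ?_
      cases side τ i j x <;> cases side τ i j y <;> grind
    · intro x
      cases side τ i j x <;> simp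
  have hpairs : ∀ g : ℕ → ℕ → ℕ, ∑ j ∈ range n, ∑ i ∈ range j, g i j =
      ∑ i ∈ range n, ∑ j ∈ range n, if i < j then g i j else 0 := by
    intro g
    rw [sum_comm (s := range n) (t := range n)]
    refine sum_congr rfl fun j hj => ?_
    rw [← sum_filter]
    congr 1
    ext i
    simp only [mem_filter, mem_range] at *
    omega
  rw [hpairs]
  unfold quadSum
  refine sum_congr rfl fun i _ => sum_congr rfl fun j _ => ?_
  by_cases hij : i < j
  · simp only [hij, if_true, true_and, hedge]
  · simp [hij]

theorem sum_range_choose_lt (n c k : ℕ) (hc : c ≤ n) :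
    ∑ b ∈ range n, (if b < c then b.choose k else 0) = c.choose (k + 1) := by
  rw [← sum_filter]
  have : {b ∈ range n | b < c} = range c := by
    ext b
    simp only [mem_filter, mem_range]
    omega
  rw [this]
  clear this hc
  induction c with
  | zero => simp
  | succ c ih => rw [sum_range_succ, ih, Nat.choose_succ_succ', add_comm]

theorem increasingSum_one (n : ℕ) : increasingSum n (fun _ _ _ _ => 1) = n.choose 4 := by
  have hreverse : increasingSum n (fun _ _ _ _ => 1) =
      ∑ d ∈ range n, ∑ c ∈ range n, if c < d then
        ∑ b ∈ range n, if b < c then ∑ a ∈ range n, if a < b then 1 else 0 else 0 else 0 := by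
    have hperm : ∀ g : ℕ → ℕ → ℕ → ℕ → ℕ,
        quadSum n (fun a b c d => g d c b a) = quadSum n g := by
      intro g
      rw [quadSum_swap_first n fun a b c d => g d c a b,
        quadSum_swap_last n fun a b c d => g c d a b,
        quadSum_swap_middle n fun a b c d => g b d a c,
        quadSum_swap_first n fun a b c d => g a d b c,
        quadSum_swap_last n fun a b c d => g a c b d, quadSum_swap_middle]
    unfold increasingSum
    rw [← hperm]
    unfold quadSum
    refine sum_congr rfl fun d _ => sum_congr rfl fun c _ => ?_
    split_ifs with hcd
    · refine sum_congr rfl fun b _ => ?_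
      split_ifs with hbc
      · simp [hcd, hbc]
      · simp [hbc]
    · simp [hcd]
  rw [hreverse, ← sum_range_choose_lt n n 3 le_rfl]
  refine sum_congr rfl fun d hd => ?_
  rw [mem_range] at hd
  rw [if_pos hd, ← sum_range_choose_lt n d 2 hd.le]
  refine sum_congr rfl fun c hc => ?_
  rw [mem_range] at hc
  congr 1
  rw [← sum_range_choose_lt n c 1 hc.le]
  refine sum_congr rfl fun b hb => ?_
  rw [mem_range] at hb
  congr 1
  rw [← sum_range_choose_lt n b 0 hb.le]
  simp

instance decidableConvexForm (p q r s : Bool) : Decidable (Sig.ConvexForm p q r s) :=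
  inferInstanceAs (Decidable (_ ∈ (_ : List (Bool × Bool × Bool × Bool))))

/-- The indicator function of the convex quadruples. -/
def convexIndicator (τ : ℕ → ℕ → ℕ → Bool) (a b c d : ℕ) : ℕ :=
  if Sig.ConvexForm (τ a b c) (τ a b d) (τ a c d) (τ b c d) then 1 else 0

/-- A convex quadruple has two edges separating the other two vertices; any other admissible
quadruple has three. -/
theorem convexIndicator_add_separations {τ : ℕ → ℕ → ℕ → Bool} {n a b c d : ℕ}
    (h : AdmissibleBelow τ n) (hab : a < b) (hbc : b < c) (hcd : c < d) (hd : d < n) :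
    convexIndicator τ a b c d +
      ((if side τ a b c ≠ side τ a b d then 1 else 0) +
      (if side τ a c b ≠ side τ a c d then 1 else 0) +
      (if side τ a d b ≠ side τ a d c then 1 else 0) +
      (if side τ b c a ≠ side τ b c d then 1 else 0) +
      (if side τ b d a ≠ side τ b d c then 1 else 0) +
      (if side τ c d a ≠ side τ c d b then 1 else 0)) = 3 := by
  have hac := hab.trans hbc
  have hbd := hbc.trans hcd
  have had := hab.trans hbd
  have := h a b c d hab hbc hcd hd
  simp only [side, convexIndicator, hab, hbc, hcd, hac, hbd, had, hab.not_gt, hbc.not_gt,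
    hcd.not_gt, hac.not_gt, hbd.not_gt, had.not_gt, if_true, if_false]
  revert this
  generalize τ a b c = p, τ a b d = q, τ a c d = r, τ b c d = s
  unfold Sig.AllowedForm
  revert p q r s
  decide

theorem convex_add_sum_sideCount_mul {τ : ℕ → ℕ → ℕ → Bool} {n : ℕ} (h : AdmissibleBelow τ n) :
    increasingSum n (convexIndicator τ) +
      ∑ j ∈ range n, ∑ i ∈ range j, sideCount τ n i j true * sideCount τ n i j false =
    3 * n.choose 4 := by
  rw [sum_sideCount_mul, quadSum_disjoint_pairs, ← increasingSum_add,
    increasingSum_congr fun a b c d => convexIndicator_add_separations h]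
  have := increasingSum_one n
  rw [increasingSum_add n (fun _ _ _ _ => 2) fun _ _ _ _ => 1,
    increasingSum_add n (fun _ _ _ _ => 1) fun _ _ _ _ => 1]
  omega

theorem sideCount_add {τ : ℕ → ℕ → ℕ → Bool} {n i j : ℕ} (hij : i < j) (hj : j < n) :
    sideCount τ n i j true + sideCount τ n i j false = n - 2 := by
  have hcard : #(((range n).erase i).erase j) = n - 2 := by
    rw [card_erase_of_mem (by simp [hj, hij.ne']), card_erase_of_mem (by simp [hij.trans hj]),
      card_range]
    omega
  rw [← hcard, ← card_filter_add_card_filter_not (s := ((range n).erase i).erase j)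
    (side τ i j · = true)]
  unfold sideCount
  congr 2 <;> ext m <;> simp <;> tauto

theorem two_mul_sum_range_tsub (A M : ℕ) :
    2 * ∑ k ∈ range M, (k - A) + (M - A) = (M - A) ^ 2 := by
  induction M with
  | zero => simp
  | succ M ih =>
    rw [sum_range_succ]
    rcases lt_or_ge M A with h | h
    · simp_all [Nat.sub_eq_zero_of_le h.le, Nat.sub_eq_zero_of_le (Nat.succ_le_of_lt h)]
    · rw [Nat.succ_sub h]
      linarith

theorem mul_add_sq_tsub_of_even {A B M : ℕ} (h : A + B = 2 * M) :
    A * B + (M - A) ^ 2 + (M - B) ^ 2 = M * M := by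
  wlog hAB : A ≤ B generalizing A B
  · rw [← this (A := B) (B := A) (by omega) (by omega)]
    ring
  obtain ⟨t, rfl⟩ : ∃ t, M = A + t := ⟨M - A, by omega⟩
  obtain rfl : B = A + 2 * t := by omega
  rw [Nat.add_sub_cancel_left, Nat.sub_eq_zero_of_le (by omega)]
  ring

theorem mul_add_sq_tsub_of_odd {A B M : ℕ} (h : A + B = 2 * M + 1) :
    A * B + ((M - A) ^ 2 + (M - A)) + ((M - B) ^ 2 + (M - B)) = M * (M + 1) := by
  wlog hAB : A ≤ B generalizing A B
  · rw [← this (A := B) (B := A) (by omega) (by omega)]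
    ring
  obtain ⟨t, rfl⟩ : ∃ t, M = A + t := ⟨M - A, by omega⟩
  obtain rfl : B = A + 2 * t + 1 := by omega
  rw [Nat.add_sub_cancel_left, Nat.sub_eq_zero_of_le (by omega)]
  ring

theorem sum_range_weight (τ : ℕ → ℕ → ℕ → Bool) (n M : ℕ) :
    ∑ k ∈ range M, weight τ n k =
      ∑ j ∈ range n, ∑ i ∈ range j, ∑ s : Bool, ∑ k ∈ range M, (k - sideCount τ n i j s) := by
  unfold weight
  rw [sum_comm]
  refine sum_congr rfl fun j _ => ?_
  rw [sum_comm]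
  exact sum_congr rfl fun i _ => sum_comm

theorem sum_edges_const (n v : ℕ) : ∑ j ∈ range n, ∑ _i ∈ range j, v = n.choose 2 * v := by
  simp only [sum_const, card_range, smul_eq_mul, ← sum_mul]
  congr 1
  simpa using (sum_range_choose_lt n n 1 le_rfl).symm ▸
    sum_congr rfl fun j hj => by simp [mem_range.1 hj]

theorem sum_sideCount_mul_of_even (τ : ℕ → ℕ → ℕ → Bool) (M : ℕ) :
    ∑ j ∈ range (2 * M + 2), ∑ i ∈ range j,
        sideCount τ (2 * M + 2) i j true * sideCount τ (2 * M + 2) i j false +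
      2 * ∑ k ∈ range M, weight τ (2 * M + 2) k + weight τ (2 * M + 2) M =
    (2 * M + 2).choose 2 * (M * M) := by
  rw [sum_range_weight, ← sum_edges_const]
  unfold weight
  simp only [mul_sum, ← sum_add_distrib]
  refine sum_congr rfl fun j hj => sum_congr rfl fun i hi => ?_
  rw [← mul_add_sq_tsub_of_even (sideCount_add (τ := τ) (mem_range.1 hi) (mem_range.1 hj)),
    ← two_mul_sum_range_tsub, ← two_mul_sum_range_tsub]
  simp only [Fintype.sum_bool, ← mul_sum]
  ring

theorem sum_sideCount_mul_of_odd (τ : ℕ → ℕ → ℕ → Bool) (M : ℕ) :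
    ∑ j ∈ range (2 * M + 3), ∑ i ∈ range j,
        sideCount τ (2 * M + 3) i j true * sideCount τ (2 * M + 3) i j false +
      2 * ∑ k ∈ range M, weight τ (2 * M + 3) k + 2 * weight τ (2 * M + 3) M =
    (2 * M + 3).choose 2 * (M * (M + 1)) := by
  rw [sum_range_weight, ← sum_edges_const]
  unfold weight
  simp only [mul_sum, ← sum_add_distrib]
  refine sum_congr rfl fun j hj => sum_congr rfl fun i hi => ?_
  rw [← mul_add_sq_tsub_of_odd (sideCount_add (τ := τ) (mem_range.1 hi) (mem_range.1 hj)),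
    ← two_mul_sum_range_tsub, ← two_mul_sum_range_tsub]
  simp only [Fintype.sum_bool, ← mul_sum]
  ring

theorem sum_range_weight_ge {τ : ℕ → ℕ → ℕ → Bool} {n M : ℕ} (h : AdmissibleBelow τ n)
    (hM : 2 * M ≤ n) : 3 * (M + 2).choose 4 ≤ ∑ k ∈ range M, weight τ n k := by
  have hsum : ∑ k ∈ range M, (k + 2).choose 3 = (M + 2).choose 4 := by
    clear hM
    induction M with
    | zero => rfl
    | succ M ih => rw [sum_range_succ, ih, Nat.choose_succ_succ' (M + 2) 3, add_comm]
  rw [← hsum, mul_sum]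
  exact sum_le_sum fun k hk => weight_ge k n (by have := mem_range.1 hk; omega) h

theorem two_mul_choose_two (n : ℕ) : 2 * (n.choose 2 : ℤ) = n * (n - 1) := by
  induction n with
  | zero => simp
  | succ n ih =>
    rw [Nat.choose_succ_succ' n 1, Nat.choose_one_right]
    push_cast
    linarith

theorem six_mul_choose_three (n : ℕ) : 6 * (n.choose 3 : ℤ) = n * (n - 1) * (n - 2) := by
  induction n with
  | zero => simp
  | succ n ih =>
    rw [Nat.choose_succ_succ' n 2]
    push_cast
    linarith [two_mul_choose_two n]

theorem twentyfour_mul_choose_four (n : ℕ) :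
    24 * (n.choose 4 : ℤ) = n * (n - 1) * (n - 2) * (n - 3) := by
  induction n with
  | zero => simp
  | succ n ih =>
    rw [Nat.choose_succ_succ' n 3]
    push_cast
    linarith [six_mul_choose_three n]

theorem Zval_le_of_even {τ : ℕ → ℕ → ℕ → Bool} {M : ℕ} (h : AdmissibleBelow τ (2 * M + 2)) :
    Zval (2 * M + 2) ≤ increasingSum (2 * M + 2) (convexIndicator τ) := by
  have hconv := convex_add_sum_sideCount_mul h
  have hsum := sum_sideCount_mul_of_even τ M
  have hlow := sum_range_weight_ge (M := M) h (by omega)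
  have htop := weight_ge M _ (by omega) h
  have hn₂ := two_mul_choose_two (2 * M + 2)
  have hn₄ := twentyfour_mul_choose_four (2 * M + 2)
  have hM₃ := six_mul_choose_three (M + 2)
  have hM₄ := twentyfour_mul_choose_four (M + 2)
  have hZ : Zval (2 * M + 2) = (M + 1) * M * M * (M - 1) / 4 := by
    unfold Zval
    congr 4 <;> omega
  rw [hZ]
  apply Nat.div_le_of_le_mul
  have hpred : (M : ℤ) * (M - 1 : ℕ) = M * (M - 1) := by
    cases M <;> simp
  have hgoal : ((M + 1) * M * M * (M - 1 : ℕ) : ℤ) = (M + 1) * M * (M * (M - 1)) := by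
    rw [← hpred]
    ring
  have hprod := congrArg (· * (M * M : ℤ)) hn₂
  zify at *
  rw [hgoal]
  linarith

theorem Zval_le_of_odd {τ : ℕ → ℕ → ℕ → Bool} {M : ℕ} (h : AdmissibleBelow τ (2 * M + 3)) :
    Zval (2 * M + 3) ≤ increasingSum (2 * M + 3) (convexIndicator τ) := by
  have hconv := convex_add_sum_sideCount_mul h
  have hsum := sum_sideCount_mul_of_odd τ M
  have hlow := sum_range_weight_ge (M := M) h (by omega)
  have htop := weight_ge M _ (by omega) h
  have hn₂ := two_mul_choose_two (2 * M + 3)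
  have hn₄ := twentyfour_mul_choose_four (2 * M + 3)
  have hM₃ := six_mul_choose_three (M + 2)
  have hM₄ := twentyfour_mul_choose_four (M + 2)
  have hZ : Zval (2 * M + 3) = (M + 1) * (M + 1) * M * M / 4 := by
    unfold Zval
    congr 4 <;> omega
  rw [hZ]
  apply Nat.div_le_of_le_mul
  have hprod := congrArg (· * (M * (M + 1) : ℤ)) hn₂
  zify at *
  linarith

end SignatureCount

/-- Let `σ` be an admissible signature function on the triples of
`[n]`. Then the number of increasing 4-tuples convex in `σ` is at least `Z(n)`. -/
theorem admissible_convex_count_ge_Z (n : ℕ)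
    (σ : Fin n → Fin n → Fin n → Bool) (hσ : Sig.Admissible σ) :
    Zval n ≤ {q : Fin n × Fin n × Fin n × Fin n |
      q.1 < q.2.1 ∧ q.2.1 < q.2.2.1 ∧ q.2.2.1 < q.2.2.2 ∧
      Sig.Convex4 σ q.1 q.2.1 q.2.2.1 q.2.2.2}.ncard := by
  classical
  let τ : ℕ → ℕ → ℕ → Bool := fun i j k =>
    if h : i < n ∧ j < n ∧ k < n then σ ⟨i, h.1⟩ ⟨j, h.2.1⟩ ⟨k, h.2.2⟩ else false
  have hτ : ∀ i j k : Fin n, τ i j k = σ i j k := fun i j k => by simp [τ]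
  have hadm : SignatureCount.AdmissibleBelow τ n := by
    intro a b c d hab hbc hcd hd
    have := hσ ⟨a, by omega⟩ ⟨b, by omega⟩ ⟨c, by omega⟩ ⟨d, hd⟩ hab hbc hcd
    simpa only [← hτ] using this
  have hcount : {q : Fin n × Fin n × Fin n × Fin n |
      q.1 < q.2.1 ∧ q.2.1 < q.2.2.1 ∧ q.2.2.1 < q.2.2.2 ∧
      Sig.Convex4 σ q.1 q.2.1 q.2.2.1 q.2.2.2}.ncard =
      SignatureCount.increasingSum n (SignatureCount.convexIndicator τ) := by
    rw [Set.ncard_eq_toFinset_card', Set.toFinset_ofPred, Finset.card_filter]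
    unfold SignatureCount.increasingSum SignatureCount.quadSum SignatureCount.convexIndicator
    simp only [Fintype.sum_prod_type, Finset.sum_range, hτ, Fin.val_fin_lt]
    refine Finset.sum_congr rfl fun a _ => Finset.sum_congr rfl fun b _ =>
      Finset.sum_congr rfl fun c _ => Finset.sum_congr rfl fun d _ => ?_
    unfold Sig.Convex4
    split_ifs <;> tauto
  rw [hcount]
  rcases Nat.lt_or_ge n 2 with hn | hn
  · have : n / 2 = 0 := by omega
    simp [Zval, this]
  · obtain ⟨M, rfl | rfl⟩ : ∃ M, n = 2 * M + 2 ∨ n = 2 * M + 3 := ⟨(n - 2) / 2, by omega⟩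
    · exact SignatureCount.Zval_le_of_even hadm
    · exact SignatureCount.Zval_le_of_odd hadm
end

section
/- Let σ be an admissible signature function on the triples of [n]. Then the number of 4-tuples a < b < c < d that are convex in σ equals 3·C(n, 4) − Σ_{k=0}^{⌊n/2⌋−1} k(n−2−k)·E_k(σ). -/
namespace Sig

open Finset

variable {n : ℕ}

open Classical in
/-- The indicator of `m` being on the left of the directed edge `(i, j)`. -/
noncomputable def leftInd (σ : Fin n → Fin n → Fin n → Bool) (i j m : Fin n) : ℕ :=
  if LeftOf σ i j m then 1 else 0

open Classical in
/-- The indicator of `m` being on the right of the directed edge `(i, j)`. -/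
noncomputable def rightInd (σ : Fin n → Fin n → Fin n → Bool) (i j m : Fin n) : ℕ :=
  if m ≠ i ∧ m ≠ j ∧ ¬ LeftOf σ i j m then 1 else 0

/-- The indicator of the edge `{i, j}` separating `m` from `p`. -/
noncomputable def sepInd (σ : Fin n → Fin n → Fin n → Bool) (i j m p : Fin n) : ℕ :=
  leftInd σ i j m * rightInd σ i j p + leftInd σ i j p * rightInd σ i j m

theorem leftCount_eq_sum (σ : Fin n → Fin n → Fin n → Bool) (i j : Fin n) :
    leftCount σ i j = ∑ m, leftInd σ i j m := by
  classical
  simp [leftCount, leftInd, Set.ncard_eq_toFinset_card']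

theorem leftCount_add_sum_rightInd (σ : Fin n → Fin n → Fin n → Bool) {i j : Fin n}
    (hij : i < j) : leftCount σ i j + ∑ m, rightInd σ i j m + 2 = n := by
  classical
  have hpoint : ∀ m, leftInd σ i j m + rightInd σ i j m
      + ((if m = i then 1 else 0) + (if m = j then 1 else 0)) = 1 := by
    intro m
    unfold leftInd rightInd LeftOf
    grind
  have h := Finset.sum_congr (rfl : (univ : Finset (Fin n)) = univ) fun m _ => hpoint m
  simp only [sum_add_distrib, sum_ite_eq', mem_univ, if_true, sum_const, card_univ,
    Fintype.card_fin, smul_eq_mul, mul_one] at h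
  rw [leftCount_eq_sum]
  omega

theorem sum_sum_eq_sum_lt {f : Fin n → Fin n → ℕ} (hf : ∀ m, f m m = 0) :
    ∑ m, ∑ p, f m p = ∑ m, ∑ p, if m < p then f m p + f p m else 0 := by
  have hsplit : ∀ m p, f m p = (if m < p then f m p else 0) + if p < m then f m p else 0 := by
    intro m p
    rcases lt_trichotomy m p with h | rfl | h
    · simp [h, h.not_gt]
    · simp [hf]
    · simp [h, h.not_gt]
  calc ∑ m, ∑ p, f m p
      = ∑ m, ∑ p, (if m < p then f m p else 0) + ∑ m, ∑ p, if p < m then f m p else 0 := by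
        simp only [← sum_add_distrib, ← hsplit]
    _ = ∑ m, ∑ p, (if m < p then f m p else 0) + ∑ m, ∑ p, if m < p then f p m else 0 := by
        rw [sum_comm (f := fun m p => if p < m then f m p else 0)]
    _ = _ := by
        simp only [← sum_add_distrib]
        refine sum_congr rfl fun m _ => sum_congr rfl fun p _ => ?_
        split_ifs <;> rfl

theorem sepInd_eq_zero (σ : Fin n → Fin n → Fin n → Bool) {i j m p : Fin n} (hij : i < j)
    (h : m = i ∨ m = j ∨ p = i ∨ p = j) : sepInd σ i j m p = 0 := by
  rcases h with rfl | rfl | rfl | rfl <;>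
    simp [sepInd, leftInd, rightInd, LeftOf, hij.not_gt]

theorem leftCount_mul_eq_sum_sepInd (σ : Fin n → Fin n → Fin n → Bool) {i j : Fin n}
    (hij : i < j) :
    leftCount σ i j * (n - 2 - leftCount σ i j)
      = ∑ m, ∑ p, if m < p then sepInd σ i j m p else 0 := by
  have h := leftCount_add_sum_rightInd σ hij
  have hr : n - 2 - leftCount σ i j = ∑ m, rightInd σ i j m := by omega
  rw [hr, leftCount_eq_sum, sum_mul_sum,
    sum_sum_eq_sum_lt (f := fun m p => leftInd σ i j m * rightInd σ i j p)]
  · rfl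
  · intro m
    unfold leftInd rightInd
    split_ifs <;> simp_all

/-- The sum of `f a b c d` over increasing quadruples. -/
def chainSum (f : Fin n → Fin n → Fin n → Fin n → ℕ) : ℕ :=
  ∑ a, ∑ b, ∑ c, ∑ d, if a < b ∧ b < c ∧ c < d then f a b c d else 0

theorem chainSum_add (f g : Fin n → Fin n → Fin n → Fin n → ℕ) :
    chainSum f + chainSum g = chainSum fun a b c d => f a b c d + g a b c d := by
  simp only [chainSum, ← sum_add_distrib]
  refine sum_congr rfl fun a _ => sum_congr rfl fun b _ => sum_congr rfl fun c _ =>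
    sum_congr rfl fun d _ => ?_
  split_ifs <;> rfl

theorem chainSum_congr {f g : Fin n → Fin n → Fin n → Fin n → ℕ}
    (h : ∀ a b c d, a < b → b < c → c < d → f a b c d = g a b c d) :
    chainSum f = chainSum g := by
  refine sum_congr rfl fun a _ => sum_congr rfl fun b _ => sum_congr rfl fun c _ =>
    sum_congr rfl fun d _ => ?_
  split_ifs with hc
  · exact h a b c d hc.1 hc.2.1 hc.2.2
  · rfl

open Classical in
theorem chainSum_indicator (P : Fin n → Fin n → Fin n → Fin n → Prop) :
    chainSum (fun a b c d => if P a b c d then 1 else 0)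
      = {q : Fin n × Fin n × Fin n × Fin n |
          q.1 < q.2.1 ∧ q.2.1 < q.2.2.1 ∧ q.2.2.1 < q.2.2.2 ∧
          P q.1 q.2.1 q.2.2.1 q.2.2.2}.ncard := by
  rw [Set.ncard_eq_toFinset_card', Set.toFinset_ofPred, card_filter]
  simp only [Fintype.sum_prod_type, chainSum, ← ite_and, and_assoc]

theorem chainSum_one : chainSum (fun _ _ _ _ : Fin n => 1) = n.choose 4 := by
  classical
  have h := chainSum_indicator (n := n) fun _ _ _ _ => True
  simp only [if_true] at h
  have hcard : Nat.card (Fin 4 ↪o Fin n) = n.choose 4 := by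
    rw [Nat.card_congr Set.powersetCard.ofFinEmbEquiv, Set.powersetCard.card, Nat.card_fin]
  rw [h, ← hcard, ← Nat.card_coe_set_eq]
  refine Nat.card_congr
    { toFun := fun q => OrderEmbedding.ofStrictMono ![q.1.1, q.1.2.1, q.1.2.2.1, q.1.2.2.2] ?_
      invFun := fun e => ⟨(e 0, e 1, e 2, e 3), by simp⟩
      left_inv := fun q => ?_
      right_inv := fun e => ?_ }
  · obtain ⟨⟨a, b, c, d⟩, h1, h2, h3, -⟩ := q
    rw [Fin.strictMono_iff_lt_succ]
    intro i
    fin_cases i <;> assumption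
  · rfl
  · ext i
    fin_cases i <;> rfl

theorem sum_rotate (f : Fin n → Fin n → Fin n → ℕ) :
    ∑ x, ∑ y, ∑ z, f x y z = ∑ y, ∑ z, ∑ x, f x y z :=
  sum_comm.trans (sum_congr rfl fun _ _ => sum_comm)

/-- Each of the six edges of an increasing quadruple is complementary to exactly one pair. -/
theorem sum_pairs_eq_chainSum (g : Fin n → Fin n → Fin n → Fin n → ℕ)
    (hg : ∀ i j m p, i < j → m = i ∨ m = j ∨ p = i ∨ p = j → g i j m p = 0) :
    ∑ i, ∑ j, ∑ m, ∑ p, (if i < j ∧ m < p then g i j m p else 0)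
      = chainSum fun a b c d => g a b c d + g a c b d + g a d b c
          + g b c a d + g b d a c + g c d a b := by
  have hpoint : ∀ i j m p, (if i < j ∧ m < p then g i j m p else 0)
      = (if i < j ∧ j < m ∧ m < p then g i j m p else 0)
      + (if i < m ∧ m < j ∧ j < p then g i j m p else 0)
      + (if i < m ∧ m < p ∧ p < j then g i j m p else 0)
      + (if m < i ∧ i < j ∧ j < p then g i j m p else 0)
      + (if m < i ∧ i < p ∧ p < j then g i j m p else 0)
      + (if m < p ∧ p < i ∧ i < j then g i j m p else 0) := by
    intro i j m p
    have := hg i j m p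
    grind (splits := 20)
  simp only [hpoint, sum_add_distrib, ← chainSum_add]
  refine congrArg₂ (· + ·) (congrArg₂ (· + ·) (congrArg₂ (· + ·) (congrArg₂ (· + ·)
    (congrArg₂ (· + ·) rfl ?_) ?_) ?_) ?_) ?_
  · exact sum_congr rfl fun i _ => sum_comm
  · exact sum_congr rfl fun i _ => sum_rotate _
  · exact (sum_congr rfl fun i _ => sum_comm).trans sum_comm
  · exact (sum_congr rfl fun i _ => sum_rotate _).trans sum_comm
  · exact (sum_congr rfl fun i _ => sum_rotate _).trans (sum_rotate _)

open Classical in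
theorem sum_sepInd_quadruple {σ : Fin n → Fin n → Fin n → Bool} (hσ : Admissible σ)
    {a b c d : Fin n} (hab : a < b) (hbc : b < c) (hcd : c < d) :
    sepInd σ a b c d + sepInd σ a c b d + sepInd σ a d b c
      + sepInd σ b c a d + sepInd σ b d a c + sepInd σ c d a b
      + (if Convex4 σ a b c d then 1 else 0) = 3 := by
  have hac := hab.trans hbc
  have hbd := hbc.trans hcd
  have had := hac.trans hcd
  have h := hσ a b c d hab hbc hcd
  simp only [sepInd, leftInd, rightInd, LeftOf, hab, hbc, hcd, hac, hbd, had, hab.not_gt,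
    hbc.not_gt, hcd.not_gt, hac.not_gt, hbd.not_gt, had.not_gt, hab.ne, hbc.ne, hcd.ne, hac.ne,
    hbd.ne, had.ne, hab.ne', hbc.ne', hcd.ne', hac.ne', hbd.ne', had.ne', true_and, false_and,
    or_false, false_or, ne_eq, not_false_eq_true, Convex4]
  rcases (σ a b c).eq_false_or_eq_true with h₁ | h₁ <;>
    rcases (σ a b d).eq_false_or_eq_true with h₂ | h₂ <;>
    rcases (σ a c d).eq_false_or_eq_true with h₃ | h₃ <;>
    rcases (σ b c d).eq_false_or_eq_true with h₄ | h₄ <;>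
    simp_all [AllowedForm, ConvexForm]

theorem sum_mul_Ek (σ : Fin n → Fin n → Fin n → Bool) :
    ∑ k ∈ range (n / 2), k * (n - 2 - k) * Ek σ k
      = ∑ i, ∑ j, if i < j then leftCount σ i j * (n - 2 - leftCount σ i j) else 0 := by
  classical
  have hEk : ∀ k, Ek σ k = ∑ i, ∑ j, if i < j ∧ IsKEdge σ k i j then 1 else 0 := by
    intro k
    rw [Ek, Set.ncard_eq_toFinset_card', Set.toFinset_ofPred, card_filter, Fintype.sum_prod_type]
  simp only [hEk, mul_sum]
  rw [sum_comm]
  refine sum_congr rfl fun i _ => ?_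
  rw [sum_comm]
  refine sum_congr rfl fun j _ => ?_
  split_ifs with hij
  · have h := leftCount_add_sum_rightInd σ hij
    simp only [hij, true_and, IsKEdge, mul_ite, mul_one, mul_zero, sum_ite_eq, mem_range]
    rw [if_pos (by omega)]
    rcases le_total (leftCount σ i j) (n - 2 - leftCount σ i j) with hle | hle
    · rw [min_eq_left hle]
    · rw [min_eq_right hle, mul_comm]
      congr 1
      omega
  · simp [hij]

theorem convex_add_sum_eq {σ : Fin n → Fin n → Fin n → Bool} (hσ : Admissible σ) :
    {q : Fin n × Fin n × Fin n × Fin n |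
        q.1 < q.2.1 ∧ q.2.1 < q.2.2.1 ∧ q.2.2.1 < q.2.2.2 ∧
        Convex4 σ q.1 q.2.1 q.2.2.1 q.2.2.2}.ncard
      + ∑ k ∈ range (n / 2), k * (n - 2 - k) * Ek σ k = 3 * n.choose 4 := by
  classical
  have hsep : ∑ k ∈ range (n / 2), k * (n - 2 - k) * Ek σ k
      = ∑ i, ∑ j, ∑ m, ∑ p, if i < j ∧ m < p then sepInd σ i j m p else 0 := by
    rw [sum_mul_Ek]
    refine sum_congr rfl fun i _ => sum_congr rfl fun j _ => ?_
    split_ifs with hij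
    · simp [leftCount_mul_eq_sum_sepInd σ hij, hij]
    · simp [hij]
  rw [hsep, sum_pairs_eq_chainSum, ← chainSum_indicator, add_comm, chainSum_add,
    chainSum_congr fun a b c d => sum_sepInd_quadruple hσ, ← chainSum_one (n := n)]
  · simp only [chainSum, mul_sum, mul_ite, mul_one, mul_zero]
  · exact fun i j m p => sepInd_eq_zero σ

end Sig

/-- Let `σ` be an admissible signature function on the triples of
`[n]`. Then the number of increasing 4-tuples convex in `σ` equals
`3·C(n,4) − Σ_{k=0}^{⌊n/2⌋−1} k(n−2−k)·E_k(σ)`. -/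
theorem admissible_convex_count_formula (n : ℕ)
    (σ : Fin n → Fin n → Fin n → Bool) (hσ : Sig.Admissible σ) :
    ({q : Fin n × Fin n × Fin n × Fin n |
        q.1 < q.2.1 ∧ q.2.1 < q.2.2.1 ∧ q.2.2.1 < q.2.2.2 ∧
        Sig.Convex4 σ q.1 q.2.1 q.2.2.1 q.2.2.2}.ncard : ℤ) =
      3 * (n.choose 4 : ℤ) -
        ∑ k ∈ Finset.range (n / 2), ((k * (n - 2 - k) : ℕ) : ℤ) * (Sig.Ek σ k : ℤ) := by
  rw [eq_sub_iff_add_eq]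
  exact_mod_cast Sig.convex_add_sum_eq hσ
end

section
/- Let σ be an admissible signature function on the triples of [n] and fix i ∈ [n]. Define a relation ⋖ on {j : i < j ≤ n} by: j ⋖ k if and only if (j < k and σ(i,j,k) = +) or (k < j and σ(i,k,j) = −). Then ⋖ is a strict total order; in particular, ⋖ is transitive. -/
/-- For `i < a < b < c`, if `σ i a b` and `σ i b c` agree, then `σ i a c` has the same sign. -/
lemma Sig.Admissible.sign_eq_of_eq {n : ℕ} {σ : Fin n → Fin n → Fin n → Bool}
    (hσ : Sig.Admissible σ) {i a b c : Fin n} (hia : i < a) (hab : a < b) (hbc : b < c)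
    (h : σ i a b = σ i b c) : σ i a c = σ i a b := by
  have hform := hσ i a b c hia hab hbc
  simp only [Sig.AllowedForm, List.mem_cons, Prod.mk.injEq, List.not_mem_nil, or_false] at hform
  grind

/-- Let `σ` be an admissible signature function on the triples of
`[n]` and fix `i`. The relation `j ⋖ k` (for `i < j`, `i < k`) defined by
`(j < k ∧ σ i j k = +) ∨ (k < j ∧ σ i k j = −)` is a strict total order on
`{j : i < j}`: it is irreflexive, satisfies trichotomy, and is transitive. -/
theorem below_relation_strict_total_order (n : ℕ)
    (σ : Fin n → Fin n → Fin n → Bool) (hσ : Sig.Admissible σ) (i : Fin n) :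
    (∀ j : Fin n, i < j → ¬ Sig.Below σ i j j) ∧
    (∀ j k : Fin n, i < j → i < k → j ≠ k → (Sig.Below σ i j k ↔ ¬ Sig.Below σ i k j)) ∧
    (∀ j k l : Fin n, i < j → i < k → i < l →
      Sig.Below σ i j k → Sig.Below σ i k l → Sig.Below σ i j l) := by
  refine ⟨fun j _ h => by simp [Sig.Below] at h, fun j k _ _ hjk => ?_,
    fun j k l hj hk hl hjk hkl => ?_⟩
  · rcases hjk.lt_or_gt with h | h <;> simp [Sig.Below, h, h.not_gt]
  · have key := @Sig.Admissible.sign_eq_of_eq n σ hσ i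
    unfold Sig.Below at *
    rcases lt_trichotomy j l with h | h | h <;> grind
end

section
/- Let σ and σ' be admissible signature functions on the triples of [n]. For a signature function τ and i < j, let λ_τ(i,j) denote the number of indices m ∉ {i,j} that are on the left of the directed edge (i,j) with respect to τ. If λ_σ(i,j) = λ_{σ'}(i,j) for all 1 ≤ i < j ≤ n, then σ = σ' (the λ-matrix of an admissible signature function determines it uniquely). -/
namespace Sig

variable {n : ℕ}

/-- The vertices to the right of `i` that lie above `j` in the order around `i`. -/
def upperSet (σ : Fin n → Fin n → Fin n → Bool) (i j : Fin n) : Set (Fin n) :=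
  {m | i < m ∧ Below σ i j m}

theorem Below.irrefl (σ : Fin n → Fin n → Fin n → Bool) (i j : Fin n) : ¬ Below σ i j j := by
  simp [Below]

/-- For an admissible signature, `Below` is transitive on the vertices to the right of `i`. -/
theorem Admissible.below_trans {σ : Fin n → Fin n → Fin n → Bool} (hσ : Admissible σ)
    {i j k l : Fin n} (hj : i < j) (hk : i < k) (hl : i < l)
    (hjk : Below σ i j k) (hkl : Below σ i k l) : Below σ i j l := by
  have key : ∀ b c d : Fin n, i < b → b < c → c < d →
      (σ i b d = σ i b c ∨ σ i b d = σ i c d) := by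
    intro b c d hb hc hd
    have h := hσ i b c d hb hc hd
    revert h
    unfold AllowedForm
    generalize σ i b c = p, σ i b d = q, σ i c d = r, σ b c d = s
    revert p q r s
    decide
  unfold Below at *
  grind

/-- The vertices above `j` shrink when `j` moves up in the order around `i`. -/
theorem Admissible.ncard_upperSet_lt {σ : Fin n → Fin n → Fin n → Bool} (hσ : Admissible σ)
    {i j k : Fin n} (hj : i < j) (hk : i < k) (hjk : Below σ i j k) :
    (upperSet σ i k).ncard < (upperSet σ i j).ncard := by
  refine Set.ncard_lt_ncard ⟨fun m hm => ⟨hm.1, hσ.below_trans hj hk hm.1 hjk hm.2⟩, fun h => ?_⟩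
  exact Below.irrefl σ i k (h ⟨hk, hjk⟩).2

/-- The left count splits into the vertices to the left of `i` and those to its right. -/
theorem leftCount_eq_add (σ : Fin n → Fin n → Fin n → Bool) {i j : Fin n} (hij : i < j) :
    leftCount σ i j = {m | m < i ∧ σ m i j = true}.ncard + (upperSet σ i j).ncard := by
  rw [← Set.ncard_union_eq]
  · unfold leftCount
    congr 1
    ext m
    simp only [LeftOf, upperSet, Below, Set.mem_union, Set.mem_ofPred_eq]
    grind
  · exact Set.disjoint_left.2 fun m hm hm' => lt_asymm hm.1 hm'.1

end Sig

/-- The λ-matrix of an admissible signature function determines it: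
if `σ` and `σ'` are admissible signature functions on the triples of `[n]` and for all
`i < j` the numbers of indices on the left of the directed edge `(i, j)` with respect to
`σ` and to `σ'` agree, then `σ = σ'` on all increasing triples. -/
theorem lambda_matrix_determines_admissible_signature (n : ℕ)
    (σ σ' : Fin n → Fin n → Fin n → Bool)
    (hσ : Sig.Admissible σ) (hσ' : Sig.Admissible σ')
    (hlam : ∀ i j : Fin n, i < j → Sig.leftCount σ i j = Sig.leftCount σ' i j) :
    ∀ i j k : Fin n, i < j → j < k → σ i j k = σ' i j k := by
  intro i
  induction i using WellFoundedLT.induction with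
  | ind i ih =>
  have hup : ∀ j, i < j → (Sig.upperSet σ i j).ncard = (Sig.upperSet σ' i j).ncard := by
    intro j hij
    have h := hlam i j hij
    rw [Sig.leftCount_eq_add σ hij, Sig.leftCount_eq_add σ' hij] at h
    have hleft : {m | m < i ∧ σ m i j = true} = {m | m < i ∧ σ' m i j = true} := by
      ext m
      exact and_congr_right fun hm => by rw [ih m hm i j hm hij]
    rw [hleft] at h
    exact Nat.add_left_cancel h
  intro j k hij hjk
  have hik := hij.trans hjk
  have hj := hup j hij
  have hk := hup k hik
  cases h : σ i j k <;> cases h' : σ' i j k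
  · rfl
  · have := hσ.ncard_upperSet_lt hik hij (Or.inr ⟨hjk, h⟩)
    have := hσ'.ncard_upperSet_lt hij hik (Or.inl ⟨hjk, h'⟩)
    omega
  · have := hσ.ncard_upperSet_lt hij hik (Or.inl ⟨hjk, h⟩)
    have := hσ'.ncard_upperSet_lt hik hij (Or.inr ⟨hjk, h'⟩)
    omega
  · rfl
end
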